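/- Let d ∈ ℕ, 1 ≤ p,q < ∞, and let S_d be an order 2 digital (t,d)-sequence over 𝔽_2 whose generating matrices E_i = (e_{i,k,ℓ})_{k,ℓ≥1} satisfy e_{i,k,ℓ} = 0 for all k > 2ℓ and all i ∈ {1,…,d}. Then there is a constant C > 0 depending only on p, q, d such that for all integers N ≥ 2: ∑_{j∈ℕ_{−1}^d} 2^{|j|(1−1/p)q} (∑_{m∈𝔻_j} |⟨D_{S_d}^N, h_{j,m}⟩|^p)^{q/p} ≤ C · 2^{qt} · N^{−q} (log N)^d. -/

import Mathlib

open MeasureTheory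
open scoped ENNReal

noncomputable section

/-- The closed unit cube `[0,1]^d`. -/
def unitCube (d : ℕ) : Set (Fin d → ℝ) := Set.univ.pi fun _ => Set.Icc (0:ℝ) 1

/-- The half-open unit cube `[0,1)^d`. -/
def unitCubeIco (d : ℕ) : Set (Fin d → ℝ) := Set.univ.pi fun _ => Set.Ico (0:ℝ) 1

/-- Discrepancy function of the first `N` points of the sequence `S` in `[0,1)^d`. -/
def discSeq (d : ℕ) (S : ℕ → Fin d → ℝ) (N : ℕ) (x : Fin d → ℝ) : ℝ :=
  (Nat.card {k : Fin N // ∀ i, S k i < x i} : ℝ) / N - ∏ i, x i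

/-- One-dimensional Haar function `h_{j,m}`, with `h_{-1,0} = 1_{[0,1)}`. -/
def haar1 (j : ℤ) (m : ℕ) (x : ℝ) : ℝ :=
  if j = -1 then (if 0 ≤ x ∧ x < 1 then 1 else 0)
  else if (m:ℝ)/2^j.toNat ≤ x ∧ x < ((m:ℝ) + 1/2)/2^j.toNat then 1
  else if ((m:ℝ) + 1/2)/2^j.toNat ≤ x ∧ x < ((m:ℝ)+1)/2^j.toNat then -1
  else 0

/-- `d`-dimensional (tensor product) Haar function. -/
def haarFn (d : ℕ) (j : Fin d → ℤ) (m : Fin d → ℕ) (x : Fin d → ℝ) : ℝ :=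
  ∏ i, haar1 (j i) (m i) (x i)

/-- Haar coefficient `⟨f, h_{j,m}⟩`. -/
def haarCoeff (d : ℕ) (f : (Fin d → ℝ) → ℝ) (j : Fin d → ℤ) (m : Fin d → ℕ) : ℝ :=
  ∫ x in unitCube d, f x * haarFn d j m x

/-- `|j| = max(j₁,0) + ⋯ + max(j_d,0)`. -/
def jnorm (d : ℕ) (j : Fin d → ℤ) : ℕ := ∑ i, (j i).toNat

/-- One-dimensional dyadic interval `I_{j,m}`. -/
def dyadicI (j : ℤ) (m : ℕ) : Set ℝ :=
  Set.Ico ((m:ℝ)/2^j.toNat) (((m:ℝ)+1)/2^j.toNat)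

/-- `d`-dimensional dyadic box `I_{j,m}`. -/
def dyadicBox (d : ℕ) (j : Fin d → ℤ) (m : Fin d → ℕ) : Set (Fin d → ℝ) :=
  Set.univ.pi fun i => dyadicI (j i) (m i)

/-- The index set `𝔻_j` as a finset. -/
def Dfin (d : ℕ) (j : Fin d → ℤ) : Finset (Fin d → ℕ) :=
  Fintype.piFinset fun i => Finset.range (2 ^ (j i).toNat)

/-- The index set `𝔻_j` for `j ∈ ℕ₀^d`. -/
def Dfin0 (d : ℕ) (j : Fin d → ℕ) : Finset (Fin d → ℕ) :=
  Fintype.piFinset fun i => Finset.range (2 ^ (j i))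

/-- Coordinate of the `k`-th point of a digital sequence over `𝔽₂` with generating
matrix `C` (`0`-based rows and columns). -/
def digitalCoord (C : ℕ → ℕ → ZMod 2) (k : ℕ) : ℝ :=
  ∑' i : ℕ,
    (((∑ ℓ ∈ Finset.range (k+1), C i ℓ * (if k.testBit ℓ then 1 else 0)).val : ℕ) : ℝ) / 2 ^ (i + 1)

/-- The digital sequence over `𝔽₂` generated by matrices `C 0, …, C (d-1)`. -/
def digitalSeq (d : ℕ) (C : Fin d → ℕ → ℕ → ZMod 2) : ℕ → Fin d → ℝ :=
  fun k j => digitalCoord (C j) k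

/-- `C 0, …, C (d-1)` generate an order `α` digital `(t,n,d)`-net over `𝔽₂`,
where the relevant submatrices have `q` rows (`q ≥ αn`) and `n` columns.
Row indices are `0`-based; the `1`-based row value of row `r` is `r+1`. -/
def IsOrderNet (α n t q d : ℕ) (C : Fin d → ℕ → ℕ → ZMod 2) : Prop :=
  ∀ (ν : Fin d → ℕ) (r : ∀ j : Fin d, Fin (ν j) → ℕ),
    (∀ j, StrictAnti (r j)) →
    (∀ j l, r j l < q) →
    (∑ j, ∑ l ∈ Finset.univ.filter (fun l : Fin (ν j) => (l:ℕ) < α), (r j l + 1)) ≤ α * n - t →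
    LinearIndependent (ZMod 2)
      (fun p : Σ j : Fin d, Fin (ν j) => fun col : Fin n => C p.1 (r p.1 p.2) col)

/-- `C 0, …, C (d-1)` generate an order `α` digital `(t,d)`-sequence over `𝔽₂`. -/
def IsOrderSeq (α t d : ℕ) (C : Fin d → ℕ → ℕ → ZMod 2) : Prop :=
  ∀ n : ℕ, t < α * n → IsOrderNet α n t (α * n) d C

/-- The condition `e_{i,k,ℓ} = 0` for all `k > 2ℓ` (in `1`-based indexing). -/
def Triangular2 (d : ℕ) (E : Fin d → ℕ → ℕ → ZMod 2) : Prop :=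
  ∀ i k ℓ, 2 * (ℓ + 1) < k + 1 → E i k ℓ = 0

open scoped Classical in
/-- The quantity `λ(U)⁻¹ ∑_{j ∈ ℕ₀^d} 2^{|j|} ∑_{m : I_{j,m} ⊆ U} ⟨f,h_{j,m}⟩²`. -/
def bmoSq (d : ℕ) (f : (Fin d → ℝ) → ℝ) (U : Set (Fin d → ℝ)) : ℝ≥0∞ :=
  (volume U)⁻¹ * ∑' j : Fin d → ℕ, ∑ m ∈ Dfin0 d j,
    if dyadicBox d (fun i => (j i : ℤ)) m ⊆ U then
      (2:ℝ≥0∞) ^ (∑ i, j i) * ENNReal.ofReal ((haarCoeff d f (fun i => (j i : ℤ)) m)^2)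
    else 0

/-- The BMO (semi-)norm `‖f | bmo^d‖`. -/
def bmoNorm (d : ℕ) (f : (Fin d → ℝ) → ℝ) : ℝ≥0∞ :=
  (⨆ U : {U : Set (Fin d → ℝ) // MeasurableSet U ∧ U ⊆ unitCubeIco d ∧ 0 < volume U},
    bmoSq d f U.1) ^ (1/2 : ℝ)

/-- The Orlicz norm of `f` on `[0,1)^d` with respect to the Young function `ψ`,
with the convention `inf ∅ = ∞`. -/
def orliczNorm (d : ℕ) (ψ : ℝ → ℝ) (f : (Fin d → ℝ) → ℝ) : ℝ≥0∞ :=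
  ⨅ K : {K : ℝ // 0 < K ∧ ∫ x in unitCubeIco d, ψ (|f x| / K) ≤ 1}, ENNReal.ofReal K.1

/-- `ψ` is a Young function which coincides with `exp(x^β) - 1` for all large `x`. -/
def IsYoungExp (β : ℝ) (ψ : ℝ → ℝ) : Prop :=
  ConvexOn ℝ (Set.Ici 0) ψ ∧ ψ 0 = 0 ∧ (∀ x : ℝ, 0 < x → 0 < ψ x) ∧
    ∃ x₀ : ℝ, ∀ x ≥ x₀, ψ x = Real.exp (x ^ β) - 1

/-- The set of valid Haar indices `j ∈ ℕ_{-1}^d`. -/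
def validJ (d : ℕ) : Set (Fin d → ℤ) := {j | ∀ i, -1 ≤ j i}

/-- The `q`-th power of the Haar-characterization of the `S^s_{p,q}B` norm:
`∑_{j ∈ ℕ_{-1}^d} 2^{|j|(s-1/p+1)q} (∑_{m ∈ 𝔻_j} |⟨f,h_{j,m}⟩|^p)^{q/p}`. -/
def besovSum (d : ℕ) (p q s : ℝ) (f : (Fin d → ℝ) → ℝ) : ℝ≥0∞ :=
  ∑' j : validJ d,
    ENNReal.ofReal ((2:ℝ) ^ ((jnorm d j.1 : ℝ) * (s - 1/p + 1) * q) *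
      (∑ m ∈ Dfin d j.1, |haarCoeff d f j.1 m| ^ p) ^ (q / p))

/-- Coordinate of the `k`-th point of a digital net with `q × n` generating matrix `C`. -/
def netCoord (q n : ℕ) (C : ℕ → ℕ → ZMod 2) (k : ℕ) : ℝ :=
  ∑ i ∈ Finset.range q,
    ((∑ ℓ ∈ Finset.range n, C i ℓ * (if k.testBit ℓ then 1 else 0)).val : ℝ) / 2 ^ (i + 1)

/-- `n_{μ+1}`, with the convention `n_{r+1} = log₂ N` (indices `1`-based, `n` stored `0`-based). -/
def nExt (r : ℕ) (n : Fin r → ℕ) (N : ℕ) (μ : ℕ) : ℝ :=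
  if h : μ < r then (n ⟨μ, h⟩ : ℝ) else Real.logb 2 N

/-- `n_μ`, with the convention `n_0 = 0` (indices `1`-based, `n` stored `0`-based). -/
def nPrev (r : ℕ) (n : Fin r → ℕ) (μ : ℕ) : ℝ :=
  if h : 1 ≤ μ ∧ μ ≤ r then (n ⟨μ - 1, by omega⟩ : ℝ) else 0

/-- The dyadic square function `Sf`, valued in `ℝ≥0∞`. -/
def sqFnE (d : ℕ) (f : (Fin d → ℝ) → ℝ) (x : Fin d → ℝ) : ℝ≥0∞ :=
  (∑' j : validJ d, ∑ m ∈ Dfin d j.1,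
    ENNReal.ofReal ((2:ℝ) ^ (2 * jnorm d j.1) * (haarCoeff d f j.1 m)^2 *
      (dyadicBox d j.1 m).indicator (fun _ => (1:ℝ)) x)) ^ (1/2 : ℝ)

/-- `sup_{p > 1} p^{-1/β} ‖f‖_{L_p([0,1]^d)}`. -/
def supLp (d : ℕ) (β : ℝ) (f : (Fin d → ℝ) → ℝ) : ℝ≥0∞ :=
  ⨆ p : {p : ℝ // 1 < p},
    ENNReal.ofReal ((p:ℝ) ^ (-(1/β))) * eLpNorm f (ENNReal.ofReal (p:ℝ)) (volume.restrict (unitCube d))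

/-- `‖f | 𝒟₀^d‖² = ∑_{j ∈ ℕ₀^d} 2^{|j|} ∑_{m ∈ 𝔻_j} ⟨f,h_{j,m}⟩²`. -/
def dNormSq (d : ℕ) (f : (Fin d → ℝ) → ℝ) : ℝ≥0∞ :=
  ∑' j : Fin d → ℕ, ∑ m ∈ Dfin0 d j,
    ENNReal.ofReal ((2:ℝ) ^ (∑ i, j i) * (haarCoeff d f (fun i => (j i : ℤ)) m)^2)

/-- `‖f | 𝒟₀^d‖`. -/
def dNorm (d : ℕ) (f : (Fin d → ℝ) → ℝ) : ℝ≥0∞ := (dNormSq d f) ^ (1/2 : ℝ)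


/-!
For a point `z` with binary digits `b`, the Haar coefficient of `1_{(z,1]}` vanishes unless `z` lies
in the dyadic interval of the Haar function, and there it is a Walsh series in `b` whose
coefficients decay like `2^{-a}` and whose `a`-th index set consists of at most two rows, of index
at most `a` beyond the interval. For an order `2` digital net, translating the point indices by a
suitable `w` under bitwise xor flips the sign of a product of such Walsh functions while keeping the
box, so all terms of low weight cancel over an aligned block of `2^n` indices. Splitting
`{0, …, N - 1}` into aligned blocks gives `|⟨D, h_{j,m}⟩| ≲ 2^t / (N 2^{|j|})` for every box.

Boxes without points have coefficient at most `4^{-|j|}`, and at most `N` boxes of a given level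
contain points. Hence the contribution of the level `j` decays geometrically in `|j|` with a ratio
`1 - c / log N`, and the sum over `j` costs one factor `log N` per coordinate.
-/

section Digits

/-- The digit of index `ρ` (counted from `0`) of the `k`-th point of the digital sequence generated
by `C`, that is, row `ρ` of the matrix-vector product `C · (k₀, k₁, …)ᵀ`. The partial application
`seqDigit C k` is the whole digit expansion of that point. -/
def seqDigit (C : ℕ → ℕ → ZMod 2) (k ρ : ℕ) : ZMod 2 :=
  ∑ ℓ ∈ Finset.range (k + 1), C ρ ℓ * (if k.testBit ℓ then 1 else 0)

lemma seqDigit_eq_sum_range (C : ℕ → ℕ → ZMod 2) {k K : ℕ} (hk : k < 2 ^ K) (ρ : ℕ) :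
    seqDigit C k ρ = ∑ ℓ ∈ Finset.range K, C ρ ℓ * (if k.testBit ℓ then 1 else 0) := by
  have extend {A B : ℕ} (hAB : A ≤ B) (hA : k < 2 ^ A) :
      ∑ ℓ ∈ Finset.range A, C ρ ℓ * (if k.testBit ℓ then 1 else 0) =
        ∑ ℓ ∈ Finset.range B, C ρ ℓ * (if k.testBit ℓ then (1 : ZMod 2) else 0) := by
    refine Finset.sum_subset (Finset.range_mono hAB) fun ℓ _ hℓ => ?_
    have hAℓ : A ≤ ℓ := by simpa using hℓ
    simp [Nat.testBit_lt_two_pow (hA.trans_le (Nat.pow_le_pow_right two_pos hAℓ))]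
  have hk' : k < 2 ^ (k + 1) := k.lt_succ_self.trans Nat.lt_two_pow_self
  rcases le_total K (k + 1) with hK | hK
  exacts [(extend hK hk).symm, extend hK hk']

lemma seqDigit_xor (C : ℕ → ℕ → ZMod 2) (k w ρ : ℕ) :
    seqDigit C (k ^^^ w) ρ = seqDigit C k ρ + seqDigit C w ρ := by
  have lt_two_pow {a : ℕ} (ha : a ≤ k + w) : a < 2 ^ (k + w) :=
    Nat.lt_two_pow_self.trans_le (Nat.pow_le_pow_right two_pos ha)
  have hk := lt_two_pow (k.le_add_right w)
  have hw := lt_two_pow (w.le_add_left k)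
  rw [seqDigit_eq_sum_range C (Nat.xor_lt_two_pow hk hw), seqDigit_eq_sum_range C hk,
    seqDigit_eq_sum_range C hw, ← Finset.sum_add_distrib]
  refine Finset.sum_congr rfl fun ℓ _ => ?_
  rw [Nat.testBit_xor]
  cases k.testBit ℓ <;> cases w.testBit ℓ <;> simp [CharTwo.add_self_eq_zero]

lemma seqDigit_ofBits (C : ℕ → ℕ → ZMod 2) {n : ℕ} (x : Fin n → ZMod 2) (ρ : ℕ) :
    seqDigit C (Nat.ofBits fun ℓ => decide (x ℓ = 1)) ρ = ∑ ℓ : Fin n, C ρ ℓ * x ℓ := by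
  have ite_eq_self : ∀ z : ZMod 2, (if decide (z = 1) then (1 : ZMod 2) else 0) = z := by decide
  rw [seqDigit_eq_sum_range C (Nat.ofBits_lt_two_pow _), Finset.sum_range]
  refine Finset.sum_congr rfl fun ℓ _ => ?_
  rw [Nat.testBit_ofBits_lt _ _ ℓ.2, ite_eq_self]

end Digits

section Nets

/-- The order `α` Niederreiter-Rosenbloom-Tsfasman weight of a set of row indices: the sum of its
`α` largest elements, each raised by `1` because rows are counted from `0`. -/
def nrtWeight (α : ℕ) (R : Finset ℕ) : ℕ :=
  (R.powerset.filter fun T => T.card ≤ α).sup fun T => ∑ ρ ∈ T, (ρ + 1)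

lemma nrtWeight_le_iff {α B : ℕ} {R : Finset ℕ} :
    nrtWeight α R ≤ B ↔ ∀ T ⊆ R, T.card ≤ α → ∑ ρ ∈ T, (ρ + 1) ≤ B := by
  simp [nrtWeight, Finset.sup_le_iff]

lemma sum_add_one_le_nrtWeight {α : ℕ} {R T : Finset ℕ} (hT : T ⊆ R) (hcard : T.card ≤ α) :
    ∑ ρ ∈ T, (ρ + 1) ≤ nrtWeight α R :=
  nrtWeight_le_iff.1 le_rfl T hT hcard

lemma nrtWeight_two_le {R : Finset ℕ} {B : ℕ} (h₁ : ∀ ρ ∈ R, ρ + 1 ≤ B)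
    (h₂ : ∀ ρ ∈ R, ∀ σ ∈ R, ρ < σ → (ρ + 1) + (σ + 1) ≤ B) : nrtWeight 2 R ≤ B := by
  refine nrtWeight_le_iff.2 fun T hT hcard => ?_
  rcases T.eq_empty_or_nonempty with rfl | hne
  · simp
  rcases (show T.card = 1 ∨ T.card = 2 by have := hne.card_pos; omega) with h | h
  · obtain ⟨ρ, rfl⟩ := Finset.card_eq_one.1 h
    simpa using h₁ ρ (hT (by simp))
  · obtain ⟨ρ, σ, hρσ, rfl⟩ := Finset.card_eq_two.1 h
    rw [Finset.sum_pair hρσ]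
    have hρ : ρ ∈ R := hT (by simp)
    have hσ : σ ∈ R := hT (by simp)
    rcases hρσ.lt_or_gt with hlt | hlt
    · exact h₂ ρ hρ σ hσ hlt
    · exact (add_comm _ _).trans_le (h₂ σ hσ ρ hρ hlt)

lemma exists_mulVec_eq_of_linearIndependent_rows {ι κ K : Type*} [Finite ι] [Fintype κ] [Field K]
    {v : ι → κ → K} (hv : LinearIndependent K v) (τ : ι → K) :
    ∃ x : κ → K, ∀ i, ∑ c, v i c * x c = τ i := by
  have := Fintype.ofFinite ι
  have hrange : LinearMap.range (Matrix.of v).mulVecLin = ⊤ :=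
    Submodule.eq_top_of_finrank_eq <|
      (LinearIndependent.rank_matrix (M := Matrix.of v) hv).trans
        (Module.finrank_fintype_fun_eq_card K).symm
  obtain ⟨x, hx⟩ := LinearMap.range_eq_top.1 hrange τ
  exact ⟨x, fun i => congrFun hx i⟩

/-- Reverses the increasing enumeration, since `IsOrderNet` lists rows in decreasing order. -/
lemma IsOrderNet.linearIndependent_rows {α n t q d : ℕ} {C : Fin d → ℕ → ℕ → ZMod 2}
    (hC : IsOrderNet α n t q d C) (hα : 0 < α) (hq : α * n ≤ q) {R : Fin d → Finset ℕ}
    (hR : ∑ i, nrtWeight α (R i) ≤ α * n - t) :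
    LinearIndependent (ZMod 2)
      fun p : Σ i, Fin (R i).card => fun col : Fin n =>
        C p.1 ((R p.1).orderEmbOfFin rfl p.2.rev) col := by
  have mem (i) (l : Fin (R i).card) : (R i).orderEmbOfFin rfl l.rev ∈ R i :=
    Finset.orderEmbOfFin_mem _ _ _
  refine hC (fun i => (R i).card) (fun i l => (R i).orderEmbOfFin rfl l.rev) (fun i a b hab =>
    (OrderEmbedding.strictMono _) (Fin.rev_lt_rev.2 hab)) (fun i l => ?_)
    ((Finset.sum_le_sum fun i _ => ?_).trans hR)
  · have hrow : (R i).orderEmbOfFin rfl l.rev + 1 ≤ nrtWeight α (R i) := by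
      simpa using sum_add_one_le_nrtWeight (α := α) (Finset.singleton_subset_iff.2 (mem i l))
        (by rwa [Finset.card_singleton])
    have := Finset.single_le_sum (f := fun i => nrtWeight α (R i)) (fun _ _ => Nat.zero_le _)
      (Finset.mem_univ i)
    omega
  · have hinj : Function.Injective fun l : Fin (R i).card => (R i).orderEmbOfFin rfl l.rev :=
      ((R i).orderEmbOfFin rfl).injective.comp Fin.rev_injective
    rw [← Finset.sum_image (f := fun ρ => ρ + 1) hinj.injOn]
    refine sum_add_one_le_nrtWeight (Finset.image_subset_iff.2 fun l _ => mem i l)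
      (Finset.card_image_le.trans ?_)
    rw [← Finset.card_range α, ← Finset.card_map Fin.valEmbedding]
    exact Finset.card_le_card fun l => by simp +contextual [Fin.exists_iff]

lemma IsOrderNet.exists_seqDigit_eq {α n t q d : ℕ} {C : Fin d → ℕ → ℕ → ZMod 2}
    (hC : IsOrderNet α n t q d C) (hα : 0 < α) (hq : α * n ≤ q) {R : Fin d → Finset ℕ}
    (hR : ∑ i, nrtWeight α (R i) ≤ α * n - t) (τ : Fin d → ℕ → ZMod 2) :
    ∃ w < 2 ^ n, ∀ i, ∀ ρ ∈ R i, seqDigit (C i) w ρ = τ i ρ := by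
  obtain ⟨x, hx⟩ := exists_mulVec_eq_of_linearIndependent_rows (hC.linearIndependent_rows hα hq hR)
    fun p => τ p.1 ((R p.1).orderEmbOfFin rfl p.2.rev)
  refine ⟨Nat.ofBits fun ℓ => decide (x ℓ = 1), Nat.ofBits_lt_two_pow _, fun i ρ hρ => ?_⟩
  obtain ⟨l, rfl⟩ : ρ ∈ Set.range ((R i).orderEmbOfFin rfl) := by simpa using hρ
  rw [seqDigit_ofBits]
  simpa using hx ⟨i, l.rev⟩

end Nets

section Boxes

/-- The integer whose binary expansion is `b 0, …, b (J - 1)`, most significant digit first. The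
real number with binary digits `b` lies in the dyadic interval `I_{J,m}` with `m = digitPrefix b J`,
or is its right endpoint if all digits of `b` from the index `J` on are `1`. -/
def digitPrefix (b : ℕ → ZMod 2) : ℕ → ℕ
  | 0 => 0
  | J + 1 => Nat.bit (b J = 1) (digitPrefix b J)

lemma digitPrefix_lt (b : ℕ → ZMod 2) (J : ℕ) : digitPrefix b J < 2 ^ J := by
  induction J with
  | zero => simp [digitPrefix]
  | succ J ih => exact Nat.bit_lt_two_pow_succ_iff.2 ih

lemma digitPrefix_congr {b b' : ℕ → ZMod 2} {J : ℕ} (h : ∀ ρ < J, b ρ = b' ρ) :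
    digitPrefix b J = digitPrefix b' J := by
  induction J with
  | zero => rfl
  | succ J ih => simp only [digitPrefix, h J J.lt_succ_self, ih fun ρ hρ => h ρ (by omega)]

lemma digitPrefix_zero (J : ℕ) : digitPrefix 0 J = 0 := by
  induction J with
  | zero => rfl
  | succ J ih => simp [digitPrefix, ih]

lemma digitPrefix_add (b b' : ℕ → ZMod 2) (J : ℕ) :
    digitPrefix (b + b') J = digitPrefix b J ^^^ digitPrefix b' J := by
  have decide_add : ∀ x y : ZMod 2, decide (x + y = 1) = (decide (x = 1) != decide (y = 1)) := by
    decide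
  induction J with
  | zero => simp [digitPrefix]
  | succ J ih => simp only [digitPrefix, ih, Pi.add_apply, decide_add, Nat.xor_bit]

lemma exists_digitPrefix_eq {J m : ℕ} (hm : m < 2 ^ J) : ∃ b, digitPrefix b J = m := by
  induction J generalizing m with
  | zero => exact ⟨0, by simp_all [digitPrefix]⟩
  | succ J ih =>
    obtain ⟨b, hb⟩ := ih (m := m / 2) (by omega)
    refine ⟨Function.update b J (if m.bodd then 1 else 0), ?_⟩
    have hprefix : digitPrefix (Function.update b J (if m.bodd then 1 else 0)) J = m / 2 :=
      (digitPrefix_congr fun ρ hρ => Function.update_of_ne hρ.ne _ _).trans hb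
    rw [digitPrefix, hprefix, Function.update_self, ← Nat.div2_val]
    cases h : m.bodd <;> simpa [h] using Nat.bit_bodd_div2 m

/-- The index `m` of the dyadic box of shape `J` to which the digits of the `k`-th point of the
digital sequence generated by `C` assign this point; see `digitPrefix` for the boundary case. -/
def boxIndex {d : ℕ} (C : Fin d → ℕ → ℕ → ZMod 2) (J : Fin d → ℕ) (k : ℕ) : Fin d → ℕ :=
  fun i => digitPrefix (seqDigit (C i) k) (J i)

lemma boxIndex_xor {d : ℕ} (C : Fin d → ℕ → ℕ → ZMod 2) (J : Fin d → ℕ) (k w : ℕ) :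
    boxIndex C J (k ^^^ w) = fun i => boxIndex C J k i ^^^ boxIndex C J w i := by
  funext i
  rw [boxIndex, boxIndex, boxIndex, ← digitPrefix_add]
  exact congrArg (digitPrefix · (J i)) (funext fun ρ => seqDigit_xor _ _ _ _)

lemma boxIndex_mem_piFinset {d : ℕ} (C : Fin d → ℕ → ℕ → ZMod 2) (J : Fin d → ℕ) (k : ℕ) :
    boxIndex C J k ∈ Fintype.piFinset fun i => Finset.range (2 ^ J i) := by
  simp [boxIndex, digitPrefix_lt]

/-- The aligned block `{A · 2ⁿ, …, (A + 1) · 2ⁿ - 1}` of indices. The corresponding points of a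
digital sequence form a digitally shifted digital net. -/
def dyadicBlock (n A : ℕ) : Finset ℕ := Finset.Ico (A * 2 ^ n) ((A + 1) * 2 ^ n)

lemma mem_dyadicBlock {n A k : ℕ} : k ∈ dyadicBlock n A ↔ k / 2 ^ n = A := by
  rw [dyadicBlock, Finset.mem_Ico, Nat.div_eq_iff (by positivity), add_mul, one_mul]
  have : 0 < 2 ^ n := by positivity
  omega

lemma card_dyadicBlock (n A : ℕ) : (dyadicBlock n A).card = 2 ^ n := by
  simp [dyadicBlock, add_mul]

lemma sum_dyadicBlock_xor {M : Type*} [AddCommMonoid M] {n w : ℕ} (hw : w < 2 ^ n) (A : ℕ)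
    (F : ℕ → M) : ∑ k ∈ dyadicBlock n A, F (k ^^^ w) = ∑ k ∈ dyadicBlock n A, F k := by
  have mem (k) (hk : k ∈ dyadicBlock n A) : k ^^^ w ∈ dyadicBlock n A := by
    rw [mem_dyadicBlock] at hk ⊢
    rw [Nat.xor_div_two_pow, hk, Nat.div_eq_of_lt hw, Nat.xor_zero]
  exact Finset.sum_nbij' (· ^^^ w) (· ^^^ w) mem mem (fun k _ => by simp)
    (fun k _ => by simp) fun _ _ => rfl

lemma nrtWeight_range_le (α J : ℕ) : nrtWeight α (Finset.range J) ≤ α * J :=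
  nrtWeight_le_iff.2 fun T hT hcard => calc
    ∑ ρ ∈ T, (ρ + 1) ≤ T.card * J := Finset.sum_le_card_nsmul _ _ _ fun ρ hρ => by
      simpa using hT hρ
    _ ≤ α * J := Nat.mul_le_mul_right J hcard

lemma IsOrderNet.exists_boxIndex_eq {α n t q d : ℕ} {C : Fin d → ℕ → ℕ → ZMod 2}
    (hC : IsOrderNet α n t q d C) (hα : 0 < α) (hq : α * n ≤ q) {J m : Fin d → ℕ}
    (hm : ∀ i, m i < 2 ^ J i) (hJ : α * ∑ i, J i ≤ α * n - t) :
    ∃ w < 2 ^ n, boxIndex C J w = m := by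
  choose b hb using fun i => exists_digitPrefix_eq (hm i)
  obtain ⟨w, hw, hdigit⟩ := hC.exists_seqDigit_eq hα hq (R := fun i => Finset.range (J i))
    ((Finset.sum_le_sum fun i _ => nrtWeight_range_le α (J i)).trans (by rwa [← Finset.mul_sum])) b
  refine ⟨w, hw, funext fun i => ?_⟩
  rw [boxIndex, digitPrefix_congr fun ρ hρ => hdigit i ρ (by simpa using hρ), hb]

lemma IsOrderNet.card_filter_boxIndex {α n t q d : ℕ} {C : Fin d → ℕ → ℕ → ZMod 2}
    (hC : IsOrderNet α n t q d C) (hα : 0 < α) (hq : α * n ≤ q) {J m : Fin d → ℕ}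
    (hm : ∀ i, m i < 2 ^ J i) (hJ : α * ∑ i, J i ≤ α * n - t) (A : ℕ) :
    ((dyadicBlock n A).filter (boxIndex C J · = m)).card * 2 ^ ∑ i, J i = 2 ^ n := by
  have card_eq : ∀ m' ∈ Fintype.piFinset fun i => Finset.range (2 ^ J i),
      ((dyadicBlock n A).filter (boxIndex C J · = m')).card =
        ((dyadicBlock n A).filter (boxIndex C J · = m)).card := fun m' hm' => by
    obtain ⟨w, hw, hbox⟩ := hC.exists_boxIndex_eq hα hq (m := fun i => m i ^^^ m' i)
      (fun i => Nat.xor_lt_two_pow (hm i) (by simpa using Fintype.mem_piFinset.1 hm' i)) hJ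
    rw [Finset.card_filter, Finset.card_filter, ← sum_dyadicBlock_xor hw]
    refine Finset.sum_congr rfl fun k _ => if_congr ?_ rfl rfl
    rw [boxIndex_xor, hbox, funext_iff, funext_iff]
    refine forall_congr' fun i => ?_
    rw [← Nat.xor_assoc, ← Nat.xor_eq_zero_iff, Nat.xor_xor_cancel_right, Nat.xor_eq_zero_iff]
  rw [← card_dyadicBlock n A, Finset.card_eq_sum_card_fiberwise (s := dyadicBlock n A)
    fun k _ => boxIndex_mem_piFinset C J k, Finset.sum_congr rfl card_eq, Finset.sum_const,
    Fintype.card_piFinset]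
  simp [Finset.prod_pow_eq_pow_sum, mul_comm]

end Boxes

section Walsh

/-- The nontrivial additive character `x ↦ (-1)ˣ` of `𝔽₂`. -/
def digitSign : AddChar (ZMod 2) ℝ := AddChar.zmodChar 2 (ζ := -1) (by norm_num)

lemma digitSign_eq_one_sub (x : ZMod 2) : digitSign x = 1 - 2 * (x.val : ℝ) := by
  have := ZMod.val_lt x
  rw [digitSign, AddChar.zmodChar_apply]
  interval_cases x.val <;> norm_num

lemma abs_digitSign (x : ZMod 2) : |digitSign x| = 1 := by
  rw [digitSign, AddChar.zmodChar_apply, abs_pow, abs_neg, abs_one, one_pow]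

/-- The Walsh function with index set `R`, as a function of the binary digits of its argument. -/
def walsh (R : Finset ℕ) (b : ℕ → ZMod 2) : ℝ := ∏ ρ ∈ R, digitSign (b ρ)

lemma walsh_add (R : Finset ℕ) (b b' : ℕ → ZMod 2) :
    walsh R (b + b') = walsh R b * walsh R b' := by
  simp only [walsh, Pi.add_apply, AddChar.map_add_eq_mul, Finset.prod_mul_distrib]

lemma abs_walsh (R : Finset ℕ) (b : ℕ → ZMod 2) : |walsh R b| = 1 := by
  simp only [walsh, Finset.abs_prod, abs_digitSign, Finset.prod_const_one]

lemma prod_walsh_seqDigit_xor {d : ℕ} (C : Fin d → ℕ → ℕ → ZMod 2) (R : Fin d → Finset ℕ)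
    (k w : ℕ) : ∏ i, walsh (R i) (seqDigit (C i) (k ^^^ w)) =
      (∏ i, walsh (R i) (seqDigit (C i) k)) * ∏ i, walsh (R i) (seqDigit (C i) w) := by
  rw [← Finset.prod_mul_distrib]
  refine Finset.prod_congr rfl fun i _ => ?_
  rw [← walsh_add]
  exact congrArg (walsh (R i)) (funext fun ρ => seqDigit_xor _ _ _ _)

section Cancellation

variable {α n t q d : ℕ} {C : Fin d → ℕ → ℕ → ZMod 2} {J : Fin d → ℕ} {R : Fin d → Finset ℕ}
  {i₀ : Fin d} {ρ₀ : ℕ}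

/-- The digits of `w` on the rows `range (J i) ∪ R i` vanish, except for a single `1` at the row
`ρ₀` beyond the box. -/
lemma IsOrderNet.exists_boxIndex_eq_zero_and_prod_walsh_eq_neg_one (hC : IsOrderNet α n t q d C)
    (hα : 0 < α) (hq : α * n ≤ q)
    (hR : ∑ i, nrtWeight α (Finset.range (J i) ∪ R i) ≤ α * n - t)
    (hmem : ρ₀ ∈ R i₀) (hle : J i₀ ≤ ρ₀) :
    ∃ w < 2 ^ n, boxIndex C J w = 0 ∧ ∏ i, walsh (R i) (seqDigit (C i) w) = -1 := by
  obtain ⟨w, hw, hdigit⟩ := hC.exists_seqDigit_eq hα hq hR fun i ρ =>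
    if i = i₀ ∧ ρ = ρ₀ then 1 else 0
  refine ⟨w, hw, funext fun i => ?_, ?_⟩
  · rw [Pi.zero_apply, ← digitPrefix_zero (J i)]
    refine digitPrefix_congr fun ρ hρ => (hdigit i ρ (by simp [hρ])).trans (if_neg ?_)
    rintro ⟨rfl, rfl⟩
    exact hle.not_gt hρ
  · have hrow (i) : ∀ ρ ∈ R i, seqDigit (C i) w ρ = if i = i₀ ∧ ρ = ρ₀ then 1 else 0 :=
      fun ρ hρ => hdigit i ρ (Finset.mem_union_right _ hρ)
    have hother (i) (hne : i ≠ i₀) : walsh (R i) (seqDigit (C i) w) = 1 :=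
      Finset.prod_eq_one fun ρ hρ => by simp [hrow _ _ hρ, hne]
    rw [Finset.prod_eq_single i₀ (fun i _ => hother i) (by simp), walsh,
      Finset.prod_eq_single_of_mem ρ₀ hmem fun ρ hρ hne => by simp [hrow _ _ hρ, hne],
      hrow _ _ hmem, if_pos ⟨rfl, rfl⟩, digitSign_eq_one_sub, ZMod.val_one]
    norm_num

lemma IsOrderNet.sum_prod_walsh_eq_zero (hC : IsOrderNet α n t q d C)
    (hα : 0 < α) (hq : α * n ≤ q)
    (hR : ∑ i, nrtWeight α (Finset.range (J i) ∪ R i) ≤ α * n - t)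
    (hmem : ρ₀ ∈ R i₀) (hle : J i₀ ≤ ρ₀) (m : Fin d → ℕ) (A : ℕ) :
    ∑ k ∈ (dyadicBlock n A).filter (boxIndex C J · = m),
      ∏ i, walsh (R i) (seqDigit (C i) k) = 0 := by
  obtain ⟨w, hw, hbox, hsign⟩ :=
    hC.exists_boxIndex_eq_zero_and_prod_walsh_eq_neg_one hα hq hR hmem hle
  refine self_eq_neg.1 ?_
  simp only [Finset.sum_filter]
  conv_lhs => rw [← sum_dyadicBlock_xor hw]
  rw [← Finset.sum_neg_distrib]
  refine Finset.sum_congr rfl fun k _ => ?_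
  have hbox_xor : boxIndex C J (k ^^^ w) = boxIndex C J k := by simp [boxIndex_xor, hbox]
  rw [hbox_xor, prod_walsh_seqDigit_xor, hsign, mul_neg_one]
  split_ifs <;> simp

end Cancellation

end Walsh

section ProductExpansion

lemma hasSum_half_pow_succ : HasSum (fun a : ℕ => (1 / 2 : ℝ) ^ (a + 1)) 1 := by
  simpa [pow_succ] using hasSum_geometric_two.mul_right (1 / 2 : ℝ)

lemma abs_mul_le_half_pow {c y : ℕ → ℝ} (hc : ∀ a, |c a| ≤ (1 / 2) ^ (a + 1))
    (hy : ∀ a, |y a| ≤ 1) (a : ℕ) : |c a * y a| ≤ (1 / 2) ^ (a + 1) := by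
  rw [abs_mul]
  exact (mul_le_of_le_one_right (abs_nonneg _) (hy a)).trans (hc a)

lemma summable_mul_of_abs_le {c y : ℕ → ℝ} (hc : ∀ a, |c a| ≤ (1 / 2) ^ (a + 1))
    (hy : ∀ a, |y a| ≤ 1) : Summable fun a => c a * y a :=
  hasSum_half_pow_succ.summable.of_norm_bounded (abs_mul_le_half_pow hc hy)

lemma abs_tsum_mul_le_one {c y : ℕ → ℝ} (hc : ∀ a, |c a| ≤ (1 / 2) ^ (a + 1))
    (hy : ∀ a, |y a| ≤ 1) : |∑' a, c a * y a| ≤ 1 := by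
  rw [← Real.norm_eq_abs]
  exact tsum_of_norm_bounded hasSum_half_pow_succ (abs_mul_le_half_pow hc hy)

variable {ι κ : Type*} [Fintype ι] {X : Finset κ} {c : ι → ℕ → ℝ} {χ : ι → ℕ → κ → ℝ} {S : ℕ}

/-- Splits `(1/2)ᵃ = (2/3)ᵃ (3/4)ᵃ` to have decay in `S` as well as summability in `a`. -/
lemma abs_prod_le_of_le_sum (hc : ∀ i a, |c i a| ≤ (1 / 2) ^ (a + 1)) {a : ι → ℕ}
    (ha : S ≤ ∑ i, a i) : |∏ i, c i (a i)| ≤ (2 / 3) ^ S * ∏ i, 1 / 2 * (3 / 4 : ℝ) ^ a i := by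
  have split (n : ℕ) : (1 / 2 : ℝ) ^ (n + 1) = (2 / 3) ^ n * (1 / 2 * (3 / 4) ^ n) := by
    rw [pow_succ, mul_left_comm, ← mul_pow]; norm_num [mul_comm]
  calc |∏ i, c i (a i)| ≤ ∏ i, (1 / 2 : ℝ) ^ (a i + 1) := by
        rw [Finset.abs_prod]
        exact Finset.prod_le_prod (fun _ _ => abs_nonneg _) fun i _ => hc i _
    _ = (2 / 3) ^ (∑ i, a i) * ∏ i, 1 / 2 * (3 / 4 : ℝ) ^ a i := by
        simp only [split, Finset.prod_mul_distrib, Finset.prod_pow_eq_pow_sum]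
    _ ≤ (2 / 3) ^ S * ∏ i, 1 / 2 * (3 / 4 : ℝ) ^ a i :=
        mul_le_mul_of_nonneg_right (pow_le_pow_of_le_one (by norm_num) (by norm_num) ha)
          (Finset.prod_nonneg fun _ _ => by positivity)

lemma abs_mul_sum_sub_ite_le (hc : ∀ i a, |c i a| ≤ (1 / 2) ^ (a + 1))
    (hχ : ∀ i a k, |χ i a k| ≤ 1) (hχ₀ : ∀ i k, χ i 0 k = 1)
    (hsum : ∀ a : ι → ℕ, a ≠ 0 → ∑ i, a i ≤ S → ∑ k ∈ X, ∏ i, χ i (a i) k = 0) (a : ι → ℕ) :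
    |(∏ i, c i (a i)) * ∑ k ∈ X, ∏ i, χ i (a i) k -
        if a = 0 then X.card * ∏ i, c i 0 else 0| ≤
      X.card * ((2 / 3) ^ S * ∏ i, 1 / 2 * (3 / 4 : ℝ) ^ a i) := by
  have bound_nonneg : 0 ≤ (X.card : ℝ) * ((2 / 3) ^ S * ∏ i, 1 / 2 * (3 / 4 : ℝ) ^ a i) := by
    have := Finset.prod_nonneg fun i (_ : i ∈ Finset.univ) =>
      (by positivity : (0 : ℝ) ≤ 1 / 2 * (3 / 4 : ℝ) ^ a i)
    positivity
  rcases eq_or_ne a 0 with rfl | ha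
  · simpa [hχ₀, mul_comm] using bound_nonneg
  rw [if_neg ha, sub_zero]
  rcases le_total (∑ i, a i) S with hS | hS
  · simpa [hsum a ha hS] using bound_nonneg
  have sum_le : |∑ k ∈ X, ∏ i, χ i (a i) k| ≤ X.card := by
    refine (Finset.abs_sum_le_sum_abs _ _).trans
      ((Finset.sum_le_card_nsmul X _ 1 fun k _ => ?_).trans (by simp))
    rw [Finset.abs_prod]
    exact Finset.prod_le_one (fun _ _ => abs_nonneg _) fun i _ => hχ i _ k
  rw [abs_mul, mul_comm]
  exact mul_le_mul sum_le (abs_prod_le_of_le_sum hc hS) (abs_nonneg _) (Nat.cast_nonneg _)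

lemma abs_sum_prod_sum_range_sub_le (hc : ∀ i a, |c i a| ≤ (1 / 2) ^ (a + 1))
    (hχ : ∀ i a k, |χ i a k| ≤ 1) (hχ₀ : ∀ i k, χ i 0 k = 1)
    (hsum : ∀ a : ι → ℕ, a ≠ 0 → ∑ i, a i ≤ S → ∑ k ∈ X, ∏ i, χ i (a i) k = 0)
    {M : ℕ} (hM : 0 < M) :
    |∑ k ∈ X, ∏ i, ∑ a ∈ Finset.range M, c i a * χ i a k - X.card * ∏ i, c i 0| ≤
      X.card * ((2 / 3) ^ S * 2 ^ Fintype.card ι) := by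
  classical
  set P := Fintype.piFinset fun _ : ι => Finset.range M with hP
  have expand : ∑ k ∈ X, ∏ i, ∑ a ∈ Finset.range M, c i a * χ i a k =
      ∑ a ∈ P, (∏ i, c i (a i)) * ∑ k ∈ X, ∏ i, χ i (a i) k := by
    simp_rw [Finset.prod_univ_sum, Finset.prod_mul_distrib, Finset.mul_sum]
    exact Finset.sum_comm
  have main_term : (X.card : ℝ) * ∏ i, c i 0 =
      ∑ a ∈ P, if a = 0 then X.card * ∏ i, c i 0 else 0 := by
    rw [Finset.sum_ite_eq' P, if_pos (by simp [hP, hM])]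
  have geom_le : ∑ a ∈ Finset.range M, 1 / 2 * (3 / 4 : ℝ) ^ a ≤ 2 := by
    have := sum_le_hasSum (Finset.range M) (fun _ _ => by positivity)
      (hasSum_geometric_of_lt_one (r := (3 / 4 : ℝ)) (by norm_num) (by norm_num))
    rw [← Finset.mul_sum]
    linarith
  rw [expand, main_term, ← Finset.sum_sub_distrib]
  calc _ ≤ ∑ a ∈ P, X.card * ((2 / 3) ^ S * ∏ i, 1 / 2 * (3 / 4 : ℝ) ^ a i) :=
        (Finset.abs_sum_le_sum_abs _ _).trans
          (Finset.sum_le_sum fun a _ => abs_mul_sum_sub_ite_le hc hχ hχ₀ hsum a)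
    _ = X.card * ((2 / 3) ^ S * ∏ _i : ι, ∑ a ∈ Finset.range M, 1 / 2 * (3 / 4 : ℝ) ^ a) := by
        rw [← Finset.mul_sum, ← Finset.mul_sum, Finset.prod_univ_sum]
    _ ≤ _ := by
        rw [Finset.prod_const, Finset.card_univ]
        gcongr

lemma abs_sum_prod_tsum_sub_le (hc : ∀ i a, |c i a| ≤ (1 / 2) ^ (a + 1))
    (hχ : ∀ i a k, |χ i a k| ≤ 1) (hχ₀ : ∀ i k, χ i 0 k = 1)
    (hsum : ∀ a : ι → ℕ, a ≠ 0 → ∑ i, a i ≤ S → ∑ k ∈ X, ∏ i, χ i (a i) k = 0) :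
    |∑ k ∈ X, ∏ i, ∑' a, c i a * χ i a k - X.card * ∏ i, c i 0| ≤
      X.card * ((2 / 3) ^ S * 2 ^ Fintype.card ι) := by
  have tendsto_prod : Filter.Tendsto
      (fun M => ∑ k ∈ X, ∏ i, ∑ a ∈ Finset.range M, c i a * χ i a k) Filter.atTop
      (nhds (∑ k ∈ X, ∏ i, ∑' a, c i a * χ i a k)) :=
    tendsto_finsetSum _ fun k _ => tendsto_finsetProd _ fun i _ =>
      (summable_mul_of_abs_le (hc i) (hχ i · k)).hasSum.tendsto_sum_nat
  refine le_of_tendsto (tendsto_prod.sub_const _).abs ?_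
  filter_upwards [Filter.eventually_gt_atTop 0] with M hM
  exact abs_sum_prod_sum_range_sub_le hc hχ hχ₀ hsum hM

end ProductExpansion

section HaarWalsh

/-- The coefficients of the Walsh expansion of the Haar coefficients of a step function; see
`haarWalsh`. -/
def haarWalshCoeff (j : ℤ) (a : ℕ) : ℝ :=
  if j = -1 then (1 / 2) ^ (a + 1) else if a = 0 then -1 / 4 else (1 / 2) ^ (a + 2)

/-- The index sets of the Walsh functions in the Walsh expansion of the Haar coefficients of a step
function; see `haarWalsh`. -/
def haarRows (j : ℤ) (a : ℕ) : Finset ℕ :=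
  if a = 0 then ∅ else if j = -1 then {a - 1} else {j.toNat, j.toNat + a}

/-- For `z ∈ I_{j,m}` with binary digits `b`, this is `2^{max(j,0)}` times the Haar coefficient
`⟨1_{(z,1]}, h_{j,m}⟩`, written as a Walsh series in `b`. -/
def haarWalsh (j : ℤ) (b : ℕ → ZMod 2) : ℝ :=
  ∑' a, haarWalshCoeff j a * walsh (haarRows j a) b

lemma abs_haarWalshCoeff_le (j : ℤ) (a : ℕ) : |haarWalshCoeff j a| ≤ (1 / 2) ^ (a + 1) := by
  rw [haarWalshCoeff]
  split_ifs with hj ha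
  · rw [abs_of_nonneg (by positivity)]
  · norm_num [ha]
  · rw [abs_of_nonneg (by positivity)]
    exact pow_le_pow_of_le_one (by norm_num) (by norm_num) (by omega)

lemma abs_haarWalsh_le_one (j : ℤ) (b : ℕ → ZMod 2) : |haarWalsh j b| ≤ 1 :=
  abs_tsum_mul_le_one (abs_haarWalshCoeff_le j) fun _ => (abs_walsh _ _).le

lemma nrtWeight_two_range_union_haarRows_le (j : ℤ) (a : ℕ) :
    nrtWeight 2 (Finset.range j.toNat ∪ haarRows j a) ≤ 2 * j.toNat + a + 2 := by
  rw [haarRows]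
  split_ifs with ha hj
  · rw [Finset.union_empty]
    exact (nrtWeight_range_le 2 _).trans (by omega)
  all_goals
    refine nrtWeight_two_le (fun ρ hρ => ?_) fun ρ hρ σ hσ hlt => ?_ <;>
    simp only [Finset.mem_union, Finset.mem_range, Finset.mem_insert, Finset.mem_singleton] at * <;>
    omega

lemma exists_mem_haarRows_le (j : ℤ) {a : ℕ} (ha : a ≠ 0) : ∃ ρ ∈ haarRows j a, j.toNat ≤ ρ := by
  rw [haarRows, if_neg ha]
  split_ifs with hj
  · exact ⟨a - 1, by simp, by simp [hj]⟩
  · exact ⟨j.toNat, by simp, le_rfl⟩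

/-- The contribution of the `k`-th point of the digital sequence generated by `C` to the Haar
coefficient of index `(j, m)` of the counting part of the discrepancy function, up to the factor
`2^{-|j|} / N`. -/
def pointContribution {d : ℕ} (C : Fin d → ℕ → ℕ → ZMod 2) (j : Fin d → ℤ) (m : Fin d → ℕ)
    (k : ℕ) : ℝ :=
  if boxIndex C (fun i => (j i).toNat) k = m then ∏ i, haarWalsh (j i) (seqDigit (C i) k) else 0

variable {n t q d : ℕ} {C : Fin d → ℕ → ℕ → ZMod 2} {j : Fin d → ℤ} {m : Fin d → ℕ}

lemma mem_Dfin : m ∈ Dfin d j ↔ ∀ i, m i < 2 ^ (j i).toNat := by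
  simp [Dfin]

lemma abs_pointContribution_le (k : ℕ) :
    |pointContribution C j m k| ≤ if boxIndex C (fun i => (j i).toNat) k = m then 1 else 0 := by
  rw [pointContribution]
  split_ifs
  · rw [Finset.abs_prod]
    exact Finset.prod_le_one (fun _ _ => abs_nonneg _) fun i _ => abs_haarWalsh_le_one _ _
  · exact abs_zero.le

lemma abs_prod_haarWalshCoeff_zero_le_one : |∏ i, haarWalshCoeff (j i) 0| ≤ 1 := by
  rw [Finset.abs_prod]
  exact Finset.prod_le_one (fun _ _ => abs_nonneg _) fun i _ =>
    (abs_haarWalshCoeff_le _ 0).trans (by norm_num)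

lemma IsOrderNet.sum_prod_walsh_haarRows_eq_zero (hC : IsOrderNet 2 n t q d C) (hq : 2 * n ≤ q)
    {a : Fin d → ℕ} (ha : a ≠ 0) (hsum : 2 * jnorm d j + 2 * d + ∑ i, a i ≤ 2 * n - t) (A : ℕ) :
    ∑ k ∈ (dyadicBlock n A).filter (boxIndex C (fun i => (j i).toNat) · = m),
      ∏ i, walsh (haarRows (j i) (a i)) (seqDigit (C i) k) = 0 := by
  obtain ⟨i₀, hi₀⟩ := Function.ne_iff.1 ha
  obtain ⟨ρ₀, hmem, hle⟩ := exists_mem_haarRows_le (j i₀) hi₀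
  refine hC.sum_prod_walsh_eq_zero two_pos hq ?_ hmem hle m A
  calc ∑ i, nrtWeight 2 (Finset.range (j i).toNat ∪ haarRows (j i) (a i))
      ≤ ∑ i, (2 * (j i).toNat + a i + 2) :=
        Finset.sum_le_sum fun i _ => nrtWeight_two_range_union_haarRows_le _ _
    _ = 2 * jnorm d j + 2 * d + ∑ i, a i := by
        simp only [Finset.sum_add_distrib, ← Finset.mul_sum, Finset.sum_const, Finset.card_univ,
          Fintype.card_fin, smul_eq_mul, jnorm]
        ring
    _ ≤ 2 * n - t := hsum

lemma IsOrderNet.card_filter_boxIndex_toNat (hC : IsOrderNet 2 n t q d C) (hq : 2 * n ≤ q)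
    (hm : m ∈ Dfin d j) (hj : 2 * jnorm d j ≤ 2 * n - t) (A : ℕ) :
    (((dyadicBlock n A).filter (boxIndex C (fun i => (j i).toNat) · = m)).card : ℝ) =
      2 ^ n / 2 ^ jnorm d j := by
  rw [eq_div_iff (by positivity)]
  exact_mod_cast hC.card_filter_boxIndex two_pos hq (mem_Dfin.1 hm) hj A

lemma IsOrderNet.abs_sum_dyadicBlock_le (hC : IsOrderNet 2 n t q d C) (hq : 2 * n ≤ q)
    (hm : m ∈ Dfin d j) {S : ℕ} (hS : 2 * jnorm d j + 2 * d + S ≤ 2 * n - t) (A : ℕ) :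
    |∑ k ∈ dyadicBlock n A,
        (pointContribution C j m k - (∏ i, haarWalshCoeff (j i) 0) / 2 ^ jnorm d j)| ≤
      2 ^ n / 2 ^ jnorm d j * ((2 / 3) ^ S * 2 ^ d) := by
  have hcard := hC.card_filter_boxIndex_toNat hq hm (by omega) A
  have key := abs_sum_prod_tsum_sub_le (c := fun i => haarWalshCoeff (j i)) (S := S)
    (χ := fun i a k => walsh (haarRows (j i) a) (seqDigit (C i) k))
    (X := (dyadicBlock n A).filter (boxIndex C (fun i => (j i).toNat) · = m))
    (fun i => abs_haarWalshCoeff_le (j i)) (fun _ _ _ => (abs_walsh _ _).le)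
    (fun _ _ => by simp [haarRows, walsh])
    fun a ha haS => hC.sum_prod_walsh_haarRows_eq_zero hq ha (by omega) A
  rw [hcard, Fintype.card_fin, Finset.sum_filter] at key
  rw [Finset.sum_sub_distrib, Finset.sum_const, card_dyadicBlock, nsmul_eq_mul]
  convert key using 3
  · rfl
  · push_cast
    ring

end HaarWalsh

section BlockDecomposition

variable {G : ℕ → ℝ} {n₀ : ℕ} {K B r : ℝ}

lemma sum_range_add_sum_dyadicBlock (G : ℕ → ℝ) (n A : ℕ) :
    ∑ k ∈ Finset.range (A * 2 ^ n), G k + ∑ k ∈ dyadicBlock n A, G k =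
      ∑ k ∈ Finset.range ((A + 1) * 2 ^ n), G k := by
  simp only [Finset.range_eq_Ico]
  exact Finset.sum_Ico_consecutive G (Nat.zero_le _) (Nat.mul_le_mul_right _ A.le_succ)

/-- Splits off the top block when `M` is odd and doubles the block length when `M` is even. -/
lemma abs_sum_range_mul_two_pow_le (hr₀ : 0 ≤ r) (hr₁ : r < 1)
    (hblock : ∀ e A, |∑ k ∈ dyadicBlock (n₀ + e) A, G k| ≤ K * r ^ e) (e M : ℕ) :
    |∑ k ∈ Finset.range (M * 2 ^ (n₀ + e)), G k| ≤ K * r ^ e / (1 - r) := by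
  have hK : 0 ≤ K := by simpa using (abs_nonneg _).trans (hblock 0 0)
  have hr : 0 < 1 - r := by linarith
  have hsucc (e : ℕ) : K * r ^ (e + 1) / (1 - r) + K * r ^ e = K * r ^ e / (1 - r) := by
    field_simp
    ring
  induction M using Nat.strong_induction_on generalizing e with
  | _ M ih =>
    rcases Nat.eq_zero_or_pos M with rfl | hM
    · simp only [zero_mul, Finset.range_zero, Finset.sum_empty, abs_zero]
      positivity
    have hhalf (A : ℕ) : A * 2 * 2 ^ (n₀ + e) = A * 2 ^ (n₀ + (e + 1)) := by ring
    have hrec := ih (M / 2) (by omega) (e + 1)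
    rcases Nat.even_or_odd' M with ⟨A, rfl | rfl⟩
    · rw [Nat.mul_div_cancel_left A two_pos, ← hhalf, mul_comm A] at hrec
      have : 0 ≤ K * r ^ e := by positivity
      linarith [hsucc e]
    · rw [show (2 * A + 1) / 2 = A by omega, ← hhalf, mul_comm A] at hrec
      rw [← sum_range_add_sum_dyadicBlock]
      exact (abs_add_le _ _).trans ((add_le_add hrec (hblock e _)).trans (hsucc e).le)

lemma abs_sum_range_le_of_dyadicBlock (hr₀ : 0 ≤ r) (hr₁ : r < 1)
    (hblock : ∀ e A, |∑ k ∈ dyadicBlock (n₀ + e) A, G k| ≤ K * r ^ e)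
    (hB : ∀ A, ∑ k ∈ dyadicBlock n₀ A, |G k| ≤ B) (N : ℕ) :
    |∑ k ∈ Finset.range N, G k| ≤ K / (1 - r) + B := by
  have hN : N / 2 ^ n₀ * 2 ^ n₀ ≤ N := Nat.div_mul_le_self _ _
  have htail : Finset.Ico (N / 2 ^ n₀ * 2 ^ n₀) N ⊆ dyadicBlock n₀ (N / 2 ^ n₀) :=
    Finset.Ico_subset_Ico_right <| by
      rw [add_mul, one_mul]
      exact (Nat.lt_div_mul_add (Nat.two_pow_pos n₀)).le
  rw [Finset.range_eq_Ico, ← Finset.sum_Ico_consecutive G (Nat.zero_le _) hN, ← Finset.range_eq_Ico]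
  refine (abs_add_le _ _).trans (add_le_add ?_ ?_)
  · simpa using abs_sum_range_mul_two_pow_le hr₀ hr₁ hblock 0 (N / 2 ^ n₀)
  · exact (Finset.abs_sum_le_sum_abs _ _).trans
      ((Finset.sum_le_sum_of_subset_of_nonneg htail fun _ _ _ => abs_nonneg _).trans (hB _))

end BlockDecomposition

section DigitalError

variable {t d : ℕ} {C : Fin d → ℕ → ℕ → ZMod 2} {j : Fin d → ℤ} {m : Fin d → ℕ}

lemma IsOrderSeq.abs_sum_dyadicBlock_le (hC : IsOrderSeq 2 t d C) (hm : m ∈ Dfin d j) (e A : ℕ) :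
    |∑ k ∈ dyadicBlock (jnorm d j + t + d + 1 + e) A,
        (pointContribution C j m k - (∏ i, haarWalshCoeff (j i) 0) / 2 ^ jnorm d j)| ≤
      2 ^ (t + 2 * d + 1) * (8 / 9) ^ e := by
  refine ((hC (jnorm d j + t + d + 1 + e) (by omega)).abs_sum_dyadicBlock_le le_rfl hm (S := 2 * e)
    (by omega) A).trans_eq ?_
  have : (8 / 9 : ℝ) ^ e = 2 ^ e * (2 / 3) ^ (2 * e) := by rw [pow_mul, ← mul_pow]; norm_num
  rw [this]
  field_simp
  ring

lemma IsOrderSeq.sum_abs_dyadicBlock_le (hC : IsOrderSeq 2 t d C) (hm : m ∈ Dfin d j) (A : ℕ) :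
    ∑ k ∈ dyadicBlock (jnorm d j + t + d + 1) A,
        |pointContribution C j m k - (∏ i, haarWalshCoeff (j i) 0) / 2 ^ jnorm d j| ≤
      2 * 2 ^ (t + d + 1) := by
  have hcard := (hC (jnorm d j + t + d + 1) (by omega)).card_filter_boxIndex_toNat le_rfl hm
    (by omega) A
  have hterm (k : ℕ) :
      |pointContribution C j m k - (∏ i, haarWalshCoeff (j i) 0) / 2 ^ jnorm d j| ≤
        (if boxIndex C (fun i => (j i).toNat) k = m then 1 else 0) + 1 / 2 ^ jnorm d j := by
    refine (abs_sub _ _).trans (add_le_add (abs_pointContribution_le k) ?_)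
    rw [abs_div, abs_of_pos (by positivity : (0 : ℝ) < 2 ^ jnorm d j)]
    gcongr
    exact abs_prod_haarWalshCoeff_zero_le_one
  refine (Finset.sum_le_sum fun k _ => hterm k).trans_eq ?_
  rw [Finset.sum_add_distrib, ← Finset.sum_filter, Finset.sum_const, nsmul_one, hcard,
    Finset.sum_const, card_dyadicBlock, nsmul_eq_mul]
  push_cast
  field_simp
  ring

lemma IsOrderSeq.abs_sum_pointContribution_sub_le (hC : IsOrderSeq 2 t d C) (hm : m ∈ Dfin d j)
    (N : ℕ) :
    |∑ k ∈ Finset.range N, pointContribution C j m k -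
        N * ((∏ i, haarWalshCoeff (j i) 0) / 2 ^ jnorm d j)| ≤ 22 * 4 ^ d * 2 ^ t := by
  have hbound := abs_sum_range_le_of_dyadicBlock (by norm_num) (by norm_num)
    (hC.abs_sum_dyadicBlock_le hm) (hC.sum_abs_dyadicBlock_le hm) N
  rw [Finset.sum_sub_distrib, Finset.sum_const, Finset.card_range, nsmul_eq_mul] at hbound
  have h₁ : (2 : ℝ) ^ (t + 2 * d + 1) = 2 * 4 ^ d * 2 ^ t := by
    rw [pow_succ, pow_add, pow_mul]; norm_num; ring
  have h₂ : (2 : ℝ) ^ (t + d + 1) ≤ 2 ^ (t + 2 * d + 1) :=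
    pow_le_pow_right₀ (by norm_num) (by omega)
  norm_num at hbound
  linarith

end DigitalError

section BinaryExpansion

/-- The real number `0.b₀b₁b₂…` in binary. -/
def binaryValue (b : ℕ → ZMod 2) : ℝ := ∑' i, ((b i).val : ℝ) / 2 ^ (i + 1)

lemma digitalCoord_eq_binaryValue (C : ℕ → ℕ → ZMod 2) (k : ℕ) :
    digitalCoord C k = binaryValue (seqDigit C k) := rfl

lemma val_div_two_pow_le (x : ZMod 2) (i : ℕ) : (x.val : ℝ) / 2 ^ (i + 1) ≤ (1 / 2) ^ (i + 1) := by
  rw [one_div_pow]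
  gcongr
  exact_mod_cast Nat.lt_succ_iff.1 x.val_lt

lemma hasSum_binaryValue (b : ℕ → ZMod 2) :
    HasSum (fun i => ((b i).val : ℝ) / 2 ^ (i + 1)) (binaryValue b) :=
  (hasSum_half_pow_succ.summable.of_nonneg_of_le (fun _ => by positivity) fun i =>
    val_div_two_pow_le (b i) i).hasSum

lemma binaryValue_nonneg (b : ℕ → ZMod 2) : 0 ≤ binaryValue b :=
  tsum_nonneg fun _ => by positivity

lemma binaryValue_le_one (b : ℕ → ZMod 2) : binaryValue b ≤ 1 :=
  hasSum_le (fun i => val_div_two_pow_le (b i) i) (hasSum_binaryValue b) hasSum_half_pow_succ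

lemma binaryValue_eq_half_add (b : ℕ → ZMod 2) :
    binaryValue b = ((b 0).val + binaryValue (fun a => b (a + 1))) / 2 := by
  rw [binaryValue, (hasSum_binaryValue b).summable.tsum_eq_zero_add, binaryValue, add_div,
    ← tsum_div_const]
  simp only [zero_add, pow_zero, one_mul, div_div, pow_succ]

lemma binaryValue_eq_digitPrefix_add_div (b : ℕ → ZMod 2) (J : ℕ) :
    binaryValue b = (digitPrefix b J + binaryValue (fun a => b (J + a))) / 2 ^ J := by
  induction J with
  | zero => simp [digitPrefix]
  | succ J ih =>
    have toNat_decide : ∀ x : ZMod 2, (decide (x = 1)).toNat = x.val := by decide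
    rw [ih, binaryValue_eq_half_add, digitPrefix, Nat.bit_val, toNat_decide]
    simp only [add_zero, add_right_comm J _ 1, ← add_assoc]
    push_cast
    field_simp
    ring

lemma hasSum_digitSign (b : ℕ → ZMod 2) :
    HasSum (fun a => (1 / 2) ^ (a + 2) * digitSign (b a)) (1 / 2 - binaryValue b) := by
  refine ((hasSum_half_pow_succ.div_const 2).sub (hasSum_binaryValue b)).congr_fun fun a => ?_
  rw [digitSign_eq_one_sub, one_div_pow, one_div_pow]
  field_simp
  ring

lemma haarWalsh_neg_one (b : ℕ → ZMod 2) : haarWalsh (-1) b = 1 - binaryValue b := by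
  have hseries : HasSum (fun a => haarWalshCoeff (-1) a * walsh (haarRows (-1) a) b)
      (1 / 2 * 1 + (1 / 2 - binaryValue b)) := by
    convert HasSum.zero_add (f := fun a => haarWalshCoeff (-1) a * walsh (haarRows (-1) a) b)
      ((hasSum_digitSign b).congr_fun fun a => by simp [haarWalshCoeff, haarRows, walsh]) using 2
    simp [haarWalshCoeff, haarRows, walsh]
  rw [haarWalsh, hseries.tsum_eq]
  ring

/-- The first digit beyond the prefix decides in which half of `I_{j,m}` the point lies. -/
lemma haarWalsh_of_ne {j : ℤ} (hj : j ≠ -1) (b : ℕ → ZMod 2) :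
    haarWalsh j b = -min (binaryValue fun a => b (j.toNat + a))
      (1 - binaryValue fun a => b (j.toNat + a)) := by
  set v := binaryValue fun a => b (j.toNat + (a + 1)) with hv
  have hseries : HasSum (fun a => haarWalshCoeff j a * walsh (haarRows j a) b)
      (-1 / 4 * 1 + digitSign (b j.toNat) / 2 * (1 / 2 - v)) := by
    have succ_term (a : ℕ) : haarWalshCoeff j (a + 1) * walsh (haarRows j (a + 1)) b =
        digitSign (b j.toNat) / 2 * ((1 / 2) ^ (a + 2) * digitSign (b (j.toNat + (a + 1)))) := by
      simp only [haarWalshCoeff, haarRows, walsh, hj, a.succ_ne_zero, if_false]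
      rw [Finset.prod_pair (by omega)]
      ring
    convert HasSum.zero_add (f := fun a => haarWalshCoeff j a * walsh (haarRows j a) b)
      (((hasSum_digitSign _).mul_left _).congr_fun succ_term) using 2
    simp [haarWalshCoeff, haarRows, walsh, hj]
  have hv0 : 0 ≤ v := binaryValue_nonneg _
  have hv1 : v ≤ 1 := binaryValue_le_one _
  rw [haarWalsh, hseries.tsum_eq, binaryValue_eq_half_add, ← hv, digitSign_eq_one_sub, add_zero]
  have := (b j.toNat).val_lt
  interval_cases (b j.toNat).val
  · rw [min_eq_left] <;> push_cast <;> linarith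
  · rw [min_eq_right] <;> push_cast <;> linarith

end BinaryExpansion

section HaarIntegrals

lemma haar1_neg_one (m : ℕ) : haar1 (-1) m = (Set.Ico 0 1).indicator 1 := by
  funext x
  simp [haar1, Set.indicator]

lemma haar1_of_ne {j : ℤ} (hj : j ≠ -1) (m : ℕ) :
    haar1 j m = (Set.Ico ((m : ℝ) / 2 ^ j.toNat) ((m + 1 / 2) / 2 ^ j.toNat)).indicator 1 -
      (Set.Ico ((m + 1 / 2 : ℝ) / 2 ^ j.toNat) ((m + 1) / 2 ^ j.toNat)).indicator 1 := by
  funext x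
  simp only [haar1, if_neg hj, Pi.sub_apply, Set.indicator, Set.mem_Ico, Pi.one_apply]
  split_ifs with hleft hright
  · exact absurd hleft.2 (not_lt.2 hright.1)
  all_goals norm_num

lemma measurable_haar1 (j : ℤ) (m : ℕ) : Measurable (haar1 j m) := by
  rcases eq_or_ne j (-1) with rfl | hj
  · rw [haar1_neg_one]
    exact measurable_one.indicator measurableSet_Ico
  · rw [haar1_of_ne hj]
    exact (measurable_one.indicator measurableSet_Ico).sub
      (measurable_one.indicator measurableSet_Ico)

lemma abs_haar1_le_one (j : ℤ) (m : ℕ) (x : ℝ) : |haar1 j m x| ≤ 1 := by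
  unfold haar1
  split_ifs <;> simp

lemma integrableOn_mul_of_abs_le_one {f g : ℝ → ℝ} (hf : Measurable f) (hg : Measurable g)
    (hf1 : ∀ x ∈ Set.Icc (0 : ℝ) 1, |f x| ≤ 1) (hg1 : ∀ x, |g x| ≤ 1) :
    IntegrableOn (fun x => f x * g x) (Set.Icc 0 1) := by
  refine Measure.integrableOn_of_bounded (M := 1) (by simp) (hf.mul hg).aestronglyMeasurable ?_
  filter_upwards [ae_restrict_mem measurableSet_Icc] with x hx
  rw [norm_mul]
  exact mul_le_one₀ (hf1 x hx) (norm_nonneg _) (hg1 x)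

lemma abs_indicator_one_le_one (s : Set ℝ) (x : ℝ) : |s.indicator (1 : ℝ → ℝ) x| ≤ 1 := by
  rw [Set.indicator]
  split_ifs <;> simp

lemma integral_Icc_mul_indicator_Ico (f : ℝ → ℝ) {α β : ℝ} (hα : 0 ≤ α) (hαβ : α ≤ β)
    (hβ : β ≤ 1) :
    ∫ x in Set.Icc 0 1, f x * (Set.Ico α β).indicator 1 x = ∫ x in α..β, f x := by
  have hsub : Set.Ico α β ∩ Set.Icc 0 1 = Set.Ico α β :=
    Set.inter_eq_left.2 fun x hx => ⟨hα.trans hx.1, hx.2.le.trans hβ⟩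
  have hmul : (fun x => f x * (Set.Ico α β).indicator 1 x) = (Set.Ico α β).indicator f := by
    simp only [← Set.indicator_mul_right, Pi.one_apply, mul_one]
  rw [hmul, integral_indicator measurableSet_Ico, Measure.restrict_restrict measurableSet_Ico,
    hsub, intervalIntegral.integral_of_le hαβ, integral_Ico_eq_integral_Ioo,
    integral_Ioc_eq_integral_Ioo]

lemma integral_Icc_mul_haar1 {f : ℝ → ℝ} (hf : Measurable f)
    (hf1 : ∀ x ∈ Set.Icc (0 : ℝ) 1, |f x| ≤ 1) {j : ℤ} (hj : j ≠ -1) {m : ℕ}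
    (hm : m < 2 ^ j.toNat) :
    ∫ x in Set.Icc 0 1, f x * haar1 j m x =
      (∫ x in (m : ℝ) / 2 ^ j.toNat..(m + 1 / 2) / 2 ^ j.toNat, f x) -
        ∫ x in (m + 1 / 2 : ℝ) / 2 ^ j.toNat..(m + 1) / 2 ^ j.toNat, f x := by
  have hm' : (m + 1 : ℝ) ≤ 2 ^ j.toNat := by exact_mod_cast hm
  have integrable (α β : ℝ) := integrableOn_mul_of_abs_le_one hf
    (measurable_one.indicator (measurableSet_Ico (a := α) (b := β))) hf1
    (abs_indicator_one_le_one _)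
  simp only [haar1_of_ne hj, Pi.sub_apply, mul_sub]
  rw [integral_sub (integrable _ _) (integrable _ _), integral_Icc_mul_indicator_Ico,
    integral_Icc_mul_indicator_Ico]
  · positivity
  · gcongr
    norm_num
  · exact div_le_one_of_le₀ hm' (by positivity)
  · positivity
  · gcongr
    norm_num
  · exact div_le_one_of_le₀ (by linarith) (by positivity)

lemma integral_Icc_id_mul_haar1 {j : ℤ} {m : ℕ} (hm : m < 2 ^ j.toNat) :
    ∫ x in Set.Icc 0 1, x * haar1 j m x =
      haarWalshCoeff j 0 / 2 ^ j.toNat / 2 ^ j.toNat := by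
  rcases eq_or_ne j (-1) with rfl | hj
  · rw [haar1_neg_one, integral_Icc_mul_indicator_Ico _ le_rfl zero_le_one le_rfl, integral_id]
    simp [haarWalshCoeff]
  · rw [integral_Icc_mul_haar1 (f := fun x => x) measurable_id'
      (fun x hx => by simpa [abs_of_nonneg hx.1] using hx.2) hj hm, haarWalshCoeff, if_neg hj,
      if_pos rfl, integral_id, integral_id]
    field_simp
    ring

lemma intervalIntegral_indicator_Ioi (z : ℝ) {α β : ℝ} (hαβ : α ≤ β) :
    ∫ x in α..β, (Set.Ioi z).indicator 1 x = max (β - z) 0 - max (α - z) 0 := by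
  have hvol : ∫ x in α..β, (Set.Ioi z).indicator (1 : ℝ → ℝ) x = max (β - max α z) 0 := by
    rw [intervalIntegral.integral_of_le hαβ, integral_indicator_one measurableSet_Ioi,
      measureReal_restrict_apply measurableSet_Ioi, Set.inter_comm, Set.Ioc_inter_Ioi,
      Real.volume_real_Ioc]
  rw [hvol]
  rcases le_total z α with hz | hz
  · rw [max_eq_left hz, max_eq_left, max_eq_left, max_eq_left] <;> linarith
  · rw [max_eq_right hz, max_eq_right (b := (0 : ℝ)) (a := α - z), sub_zero]
    linarith

lemma max_second_difference (P m : ℕ) {u : ℝ} (hu0 : 0 ≤ u) (hu1 : u ≤ 1) :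
    2 * max (m + 1 / 2 - (P + u)) 0 - max (m - (P + u)) 0 - max (m + 1 - (P + u)) 0 =
      if P = m then -min u (1 - u) else 0 := by
  rcases lt_trichotomy P m with h | rfl | h
  · have : (P + 1 : ℝ) ≤ m := by exact_mod_cast h
    rw [if_neg h.ne, max_eq_left, max_eq_left, max_eq_left] <;> linarith
  · rw [if_pos rfl, max_eq_right (by linarith : (P - (P + u) : ℝ) ≤ 0),
      max_eq_left (by linarith : (0 : ℝ) ≤ P + 1 - (P + u))]
    rcases le_total u (1 / 2) with h | h
    · rw [max_eq_left, min_eq_left] <;> linarith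
    · rw [max_eq_right, min_eq_right] <;> linarith
  · have : (m + 1 : ℝ) ≤ P := by exact_mod_cast h
    rw [if_neg h.ne', max_eq_right, max_eq_right, max_eq_right] <;> linarith

lemma integral_Icc_indicator_Ioi_binaryValue_mul_haar1 (b : ℕ → ZMod 2) {j : ℤ} {m : ℕ}
    (hm : m < 2 ^ j.toNat) :
    ∫ x in Set.Icc 0 1, (Set.Ioi (binaryValue b)).indicator 1 x * haar1 j m x =
      (if digitPrefix b j.toNat = m then haarWalsh j b else 0) / 2 ^ j.toNat := by
  rcases eq_or_ne j (-1) with rfl | hj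
  · have hm0 : digitPrefix b (Int.toNat (-1)) = m := by simpa [digitPrefix, eq_comm] using hm
    rw [haar1_neg_one, integral_Icc_mul_indicator_Ico _ le_rfl zero_le_one le_rfl,
      intervalIntegral_indicator_Ioi _ zero_le_one, if_pos hm0, haarWalsh_neg_one,
      max_eq_left (sub_nonneg.2 (binaryValue_le_one b)),
      max_eq_right (by linarith [binaryValue_nonneg b])]
    simp
  · have scale (c : ℝ) : max (c / 2 ^ j.toNat - binaryValue b) 0 =
        max (c - (digitPrefix b j.toNat + binaryValue fun a => b (j.toNat + a))) 0 /
          2 ^ j.toNat := by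
      rw [binaryValue_eq_digitPrefix_add_div b j.toNat, ← sub_div,
        ← max_div_div_right (by positivity), zero_div]
    rw [integral_Icc_mul_haar1 (measurable_one.indicator measurableSet_Ioi)
        (fun x _ => abs_indicator_one_le_one _ x) hj hm, haarWalsh_of_ne hj,
      ← max_second_difference _ _ (binaryValue_nonneg _) (binaryValue_le_one _),
      intervalIntegral_indicator_Ioi _ (by gcongr; norm_num),
      intervalIntegral_indicator_Ioi _ (by gcongr; norm_num), scale, scale, scale]
    ring

end HaarIntegrals

section HaarCoefficients

variable {d : ℕ} {j : Fin d → ℤ} {m : Fin d → ℕ}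

lemma discSeq_eq_sum_prod_indicator (S : ℕ → Fin d → ℝ) (N : ℕ) (x : Fin d → ℝ) :
    discSeq d S N x =
      (N : ℝ)⁻¹ * ∑ k ∈ Finset.range N, ∏ i, (Set.Ioi (S k i)).indicator 1 (x i) - ∏ i, x i := by
  classical
  simp only [discSeq, Set.indicator, Set.mem_Ioi, Pi.one_apply, Finset.prod_ite_zero,
    Finset.prod_const_one, Finset.sum_boole, Finset.mem_univ, true_imp_iff]
  rw [Nat.card_eq_fintype_card, Fintype.card_subtype, div_eq_inv_mul, Finset.card_filter,
    Finset.card_filter, Finset.sum_range]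

lemma haarCoeff_discSeq (S : ℕ → Fin d → ℝ) (N : ℕ) :
    haarCoeff d (discSeq d S N) j m =
      (N : ℝ)⁻¹ * ∑ k ∈ Finset.range N,
          (∏ i, ∫ x in Set.Icc 0 1, (Set.Ioi (S k i)).indicator 1 x * haar1 (j i) (m i) x) -
        ∏ i, ∫ x in Set.Icc 0 1, x * haar1 (j i) (m i) x := by
  let μ : Measure (Fin d → ℝ) := Measure.pi fun _ => volume.restrict (Set.Icc 0 1)
  have hμ : volume.restrict (unitCube d) = μ := by
    rw [volume_pi, unitCube, Measure.restrict_pi_pi]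
  have integrable_prod {g : Fin d → ℝ → ℝ} (hg : ∀ i, Measurable (g i))
      (hg1 : ∀ i, ∀ x ∈ Set.Icc (0 : ℝ) 1, |g i x| ≤ 1) :
      Integrable (fun x => ∏ i, g i (x i) * haar1 (j i) (m i) (x i)) μ :=
    Integrable.fintype_prod (f := fun i x => g i x * haar1 (j i) (m i) x) fun i =>
      integrableOn_mul_of_abs_le_one (hg i) (measurable_haar1 _ _) (hg1 i) (abs_haar1_le_one _ _)
  have integral_prod (g : Fin d → ℝ → ℝ) :
      ∫ x, ∏ i, g i (x i) * haar1 (j i) (m i) (x i) ∂μ =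
        ∏ i, ∫ x in Set.Icc 0 1, g i x * haar1 (j i) (m i) x :=
    integral_fintype_prod_eq_prod fun i x => g i x * haar1 (j i) (m i) x
  have counting_integrable (k : ℕ) := integrable_prod
    (fun i => measurable_one.indicator (measurableSet_Ioi (a := S k i)))
    fun i x _ => abs_indicator_one_le_one _ x
  have volume_integrable := integrable_prod (g := fun _ x => x) (fun _ => measurable_id)
    fun _ x hx => by simpa [abs_of_nonneg hx.1] using hx.2
  calc haarCoeff d (discSeq d S N) j m
      = ∫ x, (N : ℝ)⁻¹ * (∑ k ∈ Finset.range N,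
            ∏ i, (Set.Ioi (S k i)).indicator 1 (x i) * haar1 (j i) (m i) (x i)) -
          ∏ i, x i * haar1 (j i) (m i) (x i) ∂μ := by
        rw [haarCoeff, hμ]
        simp only [discSeq_eq_sum_prod_indicator, haarFn, sub_mul, mul_assoc, Finset.sum_mul,
          Finset.prod_mul_distrib]
    _ = _ := by
        rw [integral_sub ((integrable_finsetSum _ fun k _ => counting_integrable k).const_mul _)
          volume_integrable, integral_const_mul,
          integral_finsetSum _ fun k _ => counting_integrable k]
        simp only [integral_prod, integral_prod fun _ x => x]

variable {C : Fin d → ℕ → ℕ → ZMod 2}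

lemma haarCoeff_discSeq_digitalSeq (hm : m ∈ Dfin d j) (N : ℕ) :
    haarCoeff d (discSeq d (digitalSeq d C) N) j m =
      ((N : ℝ)⁻¹ * ∑ k ∈ Finset.range N, pointContribution C j m k -
        (∏ i, haarWalshCoeff (j i) 0) / 2 ^ jnorm d j) / 2 ^ jnorm d j := by
  rw [mem_Dfin] at hm
  have prod_two_pow : ∏ i, (2 : ℝ) ^ (j i).toNat = 2 ^ jnorm d j := Finset.prod_pow_eq_pow_sum _ _ _
  have prod_counting (k : ℕ) : ∏ i, ∫ x in Set.Icc 0 1,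
      (Set.Ioi (digitalSeq d C k i)).indicator 1 x * haar1 (j i) (m i) x =
        pointContribution C j m k / 2 ^ jnorm d j := by
    simp only [digitalSeq, digitalCoord_eq_binaryValue,
      integral_Icc_indicator_Ioi_binaryValue_mul_haar1 _ (hm _), Finset.prod_div_distrib,
      Finset.prod_ite_zero, prod_two_pow, pointContribution, boxIndex, funext_iff,
      Finset.mem_univ, true_imp_iff]
  rw [haarCoeff_discSeq]
  simp only [prod_counting, integral_Icc_id_mul_haar1 (hm _), Finset.prod_div_distrib,
    prod_two_pow, ← Finset.sum_div]
  ring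

lemma IsOrderSeq.abs_haarCoeff_le {t : ℕ} (hC : IsOrderSeq 2 t d C) (hm : m ∈ Dfin d j) {N : ℕ}
    (hN : 0 < N) : |haarCoeff d (discSeq d (digitalSeq d C) N) j m| ≤
      22 * 4 ^ d * 2 ^ t / N / 2 ^ jnorm d j := by
  have hN' : (0 : ℝ) < N := by exact_mod_cast hN
  rw [haarCoeff_discSeq_digitalSeq hm, abs_div,
    abs_of_pos (by positivity : (0 : ℝ) < 2 ^ jnorm d j)]
  gcongr
  rw [le_div_iff₀ hN', ← abs_of_pos hN', ← abs_mul, abs_of_pos hN', sub_mul, mul_comm,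
    mul_inv_cancel_left₀ hN'.ne', mul_comm _ (N : ℝ)]
  exact hC.abs_sum_pointContribution_sub_le hm N

lemma abs_haarCoeff_le_of_forall_boxIndex_ne (hm : m ∈ Dfin d j) {N : ℕ}
    (hne : ∀ k < N, boxIndex C (fun i => (j i).toNat) k ≠ m) :
    |haarCoeff d (discSeq d (digitalSeq d C) N) j m| ≤ 1 / 2 ^ jnorm d j / 2 ^ jnorm d j := by
  have hsum : ∑ k ∈ Finset.range N, pointContribution C j m k = 0 :=
    Finset.sum_eq_zero fun k hk => if_neg (hne k (Finset.mem_range.1 hk))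
  rw [haarCoeff_discSeq_digitalSeq hm, hsum, mul_zero, zero_sub, abs_div, abs_neg, abs_div,
    abs_of_pos (by positivity : (0 : ℝ) < 2 ^ jnorm d j)]
  gcongr
  exact abs_prod_haarWalshCoeff_zero_le_one

end HaarCoefficients

section Levels

/-- The terms off `T` are small and `T` has at most `n` elements, so both parts contribute at most
`min 1 (n / #D) * #D * A ^ p`. -/
lemma sum_rpow_le_two_mul_min {ι : Type*} {D T : Finset ι} {a : ι → ℝ}
    {A p : ℝ} {n : ℕ} (hp : 1 ≤ p) (hA : 0 ≤ A) (hT : T.card ≤ n) (ha₀ : ∀ i ∈ D, 0 ≤ a i)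
    (ha : ∀ i ∈ D, a i ≤ A) (haT : ∀ i ∈ D, i ∉ T → a i ≤ n / D.card * A) :
    ∑ i ∈ D, a i ^ p ≤ 2 * min 1 (n / D.card : ℝ) * D.card * A ^ p := by
  classical
  rcases D.eq_empty_or_nonempty with rfl | hD
  · simp
  have hcard : (0 : ℝ) < D.card := by exact_mod_cast hD.card_pos
  set μ : ℝ := min 1 (n / D.card) with hμ
  have hμ₀ : 0 ≤ μ := by positivity
  have term_le (i) (hi : i ∈ D) : a i ^ p ≤ (if i ∈ T then A ^ p else 0) + μ * A ^ p := by
    split_ifs with hiT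
    · exact (Real.rpow_le_rpow (ha₀ i hi) (ha i hi) (by linarith)).trans
        (le_add_of_nonneg_right (by positivity))
    · have hle : a i ≤ μ * A := by
        rw [hμ, min_mul_of_nonneg _ _ hA, one_mul]
        exact le_min (ha i hi) (haT i hi hiT)
      calc a i ^ p ≤ (μ * A) ^ p := Real.rpow_le_rpow (ha₀ i hi) hle (by linarith)
        _ = μ ^ p * A ^ p := Real.mul_rpow hμ₀ hA
        _ ≤ μ * A ^ p := by
          gcongr
          exact Real.rpow_le_self_of_le_one hμ₀ (min_le_left _ _) hp
        _ = 0 + μ * A ^ p := (zero_add _).symm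
  have card_le : ((D.filter (· ∈ T)).card : ℝ) ≤ μ * D.card := by
    rw [hμ, min_mul_of_nonneg _ _ hcard.le, one_mul, div_mul_cancel₀ _ hcard.ne']
    refine le_min (by exact_mod_cast Finset.card_filter_le _ _) (by exact_mod_cast
      (Finset.card_le_card fun i hi => (Finset.mem_filter.1 hi).2).trans hT)
  calc ∑ i ∈ D, a i ^ p ≤ ∑ i ∈ D, ((if i ∈ T then A ^ p else 0) + μ * A ^ p) :=
        Finset.sum_le_sum term_le
    _ = (D.filter (· ∈ T)).card * A ^ p + D.card * (μ * A ^ p) := by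
        rw [Finset.sum_add_distrib, ← Finset.sum_filter]
        simp only [Finset.sum_const, nsmul_eq_mul]
    _ ≤ μ * D.card * A ^ p + D.card * (μ * A ^ p) := by gcongr
    _ = 2 * μ * D.card * A ^ p := by ring

lemma min_one_le_rpow {a r : ℝ} (ha : 0 ≤ a) (hr₀ : 0 ≤ r) (hr₁ : r ≤ 1) : min 1 a ≤ a ^ r := by
  rcases le_total a 1 with h | h
  · exact (min_le_right _ _).trans (Real.self_le_rpow_of_le_one ha h hr₁)
  · exact (min_le_left _ _).trans (Real.one_le_rpow h hr₀)

lemma rpow_mul_mul_div_rpow {X c κ p : ℝ} (q : ℝ) (hX : 0 < X) (hc : 0 ≤ c) (hκ : 0 ≤ κ)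
    (hp : p ≠ 0) :
    X ^ ((0 - 1 / p + 1) * q) * (c * X * (κ / X) ^ p) ^ (q / p) = c ^ (q / p) * κ ^ q := by
  rw [Real.mul_rpow (by positivity) (by positivity), Real.mul_rpow hc hX.le,
    ← Real.rpow_mul (by positivity), mul_div_cancel₀ _ hp, Real.div_rpow hκ hX.le]
  have hexp : (0 - 1 / p + 1) * q = q - q / p := by ring
  rw [hexp, Real.rpow_sub hX]
  field_simp

lemma card_Dfin (d : ℕ) (j : Fin d → ℤ) : (Dfin d j).card = 2 ^ jnorm d j := by
  simp [Dfin, jnorm, Finset.prod_pow_eq_pow_sum]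

variable {d t : ℕ} {C : Fin d → ℕ → ℕ → ZMod 2}

lemma IsOrderSeq.sum_abs_haarCoeff_rpow_le (hC : IsOrderSeq 2 t d C) {p : ℝ} (hp : 1 ≤ p)
    {N : ℕ} (hN : 0 < N) (j : Fin d → ℤ) :
    ∑ m ∈ Dfin d j, |haarCoeff d (discSeq d (digitalSeq d C) N) j m| ^ p ≤
      2 * min 1 (N / 2 ^ jnorm d j : ℝ) * 2 ^ jnorm d j *
        (22 * 4 ^ d * 2 ^ t / N / 2 ^ jnorm d j) ^ p := by
  have hN' : (0 : ℝ) < N := by exact_mod_cast hN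
  have hK : (1 : ℝ) ≤ 22 * 4 ^ d * 2 ^ t :=
    one_le_mul_of_one_le_of_one_le
      (one_le_mul_of_one_le_of_one_le (by norm_num) (one_le_pow₀ (by norm_num)))
      (one_le_pow₀ (by norm_num))
  have hcard : ((Dfin d j).card : ℝ) = 2 ^ jnorm d j := by rw [card_Dfin]; push_cast; rfl
  have key := sum_rpow_le_two_mul_min (D := Dfin d j) (n := N)
    (T := (Finset.range N).image (boxIndex C fun i => (j i).toNat)) hp
    (by positivity : 0 ≤ 22 * 4 ^ d * 2 ^ t / N / (2 : ℝ) ^ jnorm d j)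
    (Finset.card_image_le.trans (Finset.card_range N).le) (fun _ _ => abs_nonneg _)
    (fun m hm => hC.abs_haarCoeff_le hm hN) fun m hm hmT =>
      (abs_haarCoeff_le_of_forall_boxIndex_ne hm fun k hk hkm =>
        hmT (Finset.mem_image.2 ⟨k, Finset.mem_range.2 hk, hkm⟩)).trans ?_
  · rwa [hcard] at key
  · rw [hcard, div_mul_div_comm, mul_div_cancel₀ _ hN'.ne', div_div]
    gcongr

/-- Boxes at a level `s = |j|` well above `log₂ N` mostly contain no point; interpolating
`min 1 (N / 2 ^ s) ≤ (N / 2 ^ s) ^ (1 / log₂ N)` turns this into geometric decay. -/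
lemma IsOrderSeq.besov_level_le (hC : IsOrderSeq 2 t d C) {p q : ℝ} (hp : 1 ≤ p) (hq : 0 ≤ q)
    {N : ℕ} (hN : 2 ≤ N) (j : Fin d → ℤ) :
    (2 : ℝ) ^ ((jnorm d j : ℝ) * (0 - 1 / p + 1) * q) *
        (∑ m ∈ Dfin d j, |haarCoeff d (discSeq d (digitalSeq d C) N) j m| ^ p) ^ (q / p) ≤
      4 ^ (q / p) * (22 * 4 ^ d * 2 ^ t / N) ^ q *
        ((2 : ℝ) ^ (-(q / p / Real.logb 2 N))) ^ jnorm d j := by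
  set s := jnorm d j
  set ℓ := Real.logb 2 N with hℓ
  have hN' : (2 : ℝ) ≤ N := by exact_mod_cast hN
  have hℓ₁ : 1 ≤ ℓ := (Real.le_logb_iff_rpow_le one_lt_two (by linarith)).2 (by simpa using hN')
  have min_le : 2 * min 1 ((N : ℝ) / 2 ^ s) ≤ 4 * 2 ^ (-(s / ℓ)) := by
    have hNℓ : (N : ℝ) ^ (1 / ℓ) = 2 := by
      rw [← Real.rpow_logb two_pos (by norm_num) (by linarith : (0 : ℝ) < N), ← hℓ,
        ← Real.rpow_mul zero_le_two, mul_one_div_cancel (by positivity), Real.rpow_one]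
    calc 2 * min 1 ((N : ℝ) / 2 ^ s) ≤ 2 * (N / 2 ^ s) ^ (1 / ℓ) := by
          gcongr
          exact min_one_le_rpow (by positivity) (by positivity) ((div_le_one (by linarith)).2 hℓ₁)
      _ = 4 * 2 ^ (-(s / ℓ)) := by
          rw [Real.div_rpow (by positivity) (by positivity), hNℓ, ← Real.rpow_natCast,
            ← Real.rpow_mul zero_le_two, Real.rpow_neg zero_le_two, mul_one_div]
          ring
  calc (2 : ℝ) ^ ((s : ℝ) * (0 - 1 / p + 1) * q) *
        (∑ m ∈ Dfin d j, |haarCoeff d (discSeq d (digitalSeq d C) N) j m| ^ p) ^ (q / p)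
      ≤ ((2 : ℝ) ^ s) ^ ((0 - 1 / p + 1) * q) *
          (2 * min 1 (N / 2 ^ s : ℝ) * 2 ^ s * (22 * 4 ^ d * 2 ^ t / N / 2 ^ s) ^ p) ^ (q / p) := by
        rw [mul_assoc, Real.rpow_mul zero_le_two, Real.rpow_natCast]
        gcongr
        exact hC.sum_abs_haarCoeff_rpow_le hp (by omega) j
    _ = (2 * min 1 (N / 2 ^ s : ℝ)) ^ (q / p) * (22 * 4 ^ d * 2 ^ t / N) ^ q :=
        rpow_mul_mul_div_rpow q (by positivity) (by positivity) (by positivity) (by positivity)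
    _ ≤ (4 * 2 ^ (-(s / ℓ))) ^ (q / p) * (22 * 4 ^ d * 2 ^ t / N) ^ q := by gcongr
    _ = _ := by
        have hdecay : ((2 : ℝ) ^ (-(s / ℓ))) ^ (q / p) = ((2 : ℝ) ^ (-(q / p / ℓ))) ^ s := by
          rw [← Real.rpow_natCast _ s, ← Real.rpow_mul zero_le_two, ← Real.rpow_mul zero_le_two]
          congr 1
          field_simp
        rw [Real.mul_rpow (by positivity) (by positivity), hdecay, mul_right_comm]

end Levels

section LevelSum

lemma tsum_pi_prod_le {ι : Type*} [Fintype ι] {κ : ι → Type*} (f : ∀ i, κ i → ℝ≥0∞) :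
    ∑' n : ∀ i, κ i, ∏ i, f i (n i) ≤ ∏ i, ∑' a, f i a := by
  classical
  rw [ENNReal.tsum_eq_iSup_sum]
  refine iSup_le fun F => ?_
  calc ∑ n ∈ F, ∏ i, f i (n i)
      ≤ ∑ n ∈ Fintype.piFinset fun i => F.image (· i), ∏ i, f i (n i) :=
        Finset.sum_le_sum_of_subset fun n hn =>
          Fintype.mem_piFinset.2 fun i => Finset.mem_image_of_mem (· i) hn
    _ = ∏ i, ∑ a ∈ F.image (· i), f i a := (Finset.prod_univ_sum _ _).symm
    _ ≤ ∏ i, ∑' a, f i a := Finset.prod_le_prod' fun i _ => ENNReal.sum_le_tsum _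

/-- The one-dimensional Haar levels `-1, 0, 1, …`, numbered from `0`. -/
def haarLevelEquiv : ℕ ≃ {a : ℤ // -1 ≤ a} where
  toFun n := ⟨n - 1, by omega⟩
  invFun a := (a.1 + 1).toNat
  left_inv n := by simp
  right_inv a := Subtype.ext (by have := a.2; grind)

lemma tsum_pow_toNat (x : ℝ≥0∞) :
    ∑' a : {a : ℤ // -1 ≤ a}, x ^ a.1.toNat = 1 + (1 - x)⁻¹ := by
  rw [← haarLevelEquiv.tsum_eq, tsum_eq_zero_add' ENNReal.summable, ← ENNReal.tsum_geometric]
  simp [haarLevelEquiv]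

lemma tsum_validJ_pow_jnorm_le (d : ℕ) (x : ℝ≥0∞) :
    ∑' j : validJ d, x ^ jnorm d j.1 ≤ (1 + (1 - x)⁻¹) ^ d := by
  let e : (Fin d → {a : ℤ // -1 ≤ a}) ≃ validJ d := Equiv.subtypePiEquivPi.symm
  rw [← e.tsum_eq]
  calc ∑' j : Fin d → {a : ℤ // -1 ≤ a}, x ^ jnorm d (fun i => (j i).1)
      = ∑' j : Fin d → {a : ℤ // -1 ≤ a}, ∏ i, x ^ (j i).1.toNat := by
        simp only [jnorm, Finset.prod_pow_eq_pow_sum]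
    _ ≤ ∏ _ : Fin d, ∑' a : {a : ℤ // -1 ≤ a}, x ^ a.1.toNat := tsum_pi_prod_le _
    _ = (1 + (1 - x)⁻¹) ^ d := by simp [tsum_pow_toNat]

lemma inv_one_sub_exp_neg_le {y : ℝ} (hy : 0 < y) : (1 - Real.exp (-y))⁻¹ ≤ 1 + 1 / y := by
  have hexp : Real.exp (-y) ≤ (1 + y)⁻¹ := by
    rw [Real.exp_neg]
    gcongr
    linarith [Real.add_one_le_exp y]
  calc (1 - Real.exp (-y))⁻¹ ≤ (1 - (1 + y)⁻¹)⁻¹ := by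
        gcongr
        rw [sub_pos]
        exact inv_lt_one_of_one_lt₀ (by linarith)
    _ = 1 + 1 / y := by
        have hsub : 1 - (1 + y)⁻¹ = y / (1 + y) := by field_simp; ring
        rw [hsub, inv_div, add_div, div_self hy.ne', add_comm]

lemma one_add_inv_one_sub_two_rpow_le {r ℓ : ℝ} (hr : 0 < r) (hℓ : 1 ≤ ℓ) :
    1 + (1 - (2 : ℝ) ^ (-(r / ℓ)))⁻¹ ≤ (2 + 1 / (r * Real.log 2)) * ℓ := by
  have : 0 < Real.log 2 := Real.log_pos one_lt_two
  have hexp : (2 : ℝ) ^ (-(r / ℓ)) = Real.exp (-(r * Real.log 2 / ℓ)) := by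
    rw [Real.rpow_def_of_pos two_pos]
    congr 1
    ring
  calc 1 + (1 - (2 : ℝ) ^ (-(r / ℓ)))⁻¹ ≤ 1 + (1 + 1 / (r * Real.log 2 / ℓ)) := by
        rw [hexp]
        gcongr
        exact inv_one_sub_exp_neg_le (by positivity)
    _ = 2 + 1 / (r * Real.log 2) * ℓ := by field_simp; ring
    _ ≤ (2 + 1 / (r * Real.log 2)) * ℓ := by linarith

lemma tsum_validJ_ofReal_pow_jnorm_le (d : ℕ) {x : ℝ} (hx₀ : 0 ≤ x) (hx₁ : x < 1) :
    ∑' j : validJ d, ENNReal.ofReal (x ^ jnorm d j.1) ≤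
      ENNReal.ofReal ((1 + (1 - x)⁻¹) ^ d) := by
  have hinv : 0 ≤ (1 - x)⁻¹ := inv_nonneg.2 (sub_nonneg.2 hx₁.le)
  rw [ENNReal.ofReal_pow (by linarith), ENNReal.ofReal_add zero_le_one hinv,
    ENNReal.ofReal_inv_of_pos (sub_pos.2 hx₁), ENNReal.ofReal_sub _ hx₀, ENNReal.ofReal_one]
  simp only [ENNReal.ofReal_pow hx₀]
  exact tsum_validJ_pow_jnorm_le d _

lemma IsOrderSeq.besovSum_le {d t : ℕ} {C : Fin d → ℕ → ℕ → ZMod 2} (hC : IsOrderSeq 2 t d C)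
    {p q : ℝ} (hp : 1 ≤ p) (hq : 0 < q) {N : ℕ} (hN : 2 ≤ N) :
    besovSum d p q 0 (discSeq d (digitalSeq d C) N) ≤
      ENNReal.ofReal (4 ^ (q / p) * (22 * 4 ^ d * 2 ^ t / N) ^ q *
        ((2 + 1 / (q / p * Real.log 2)) * Real.logb 2 N) ^ d) := by
  have hN' : (2 : ℝ) ≤ N := by exact_mod_cast hN
  have hℓ : 1 ≤ Real.logb 2 N :=
    (Real.le_logb_iff_rpow_le one_lt_two (by linarith)).2 (by simpa using hN')
  have hr : 0 < q / p := by positivity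
  set x : ℝ := 2 ^ (-(q / p / Real.logb 2 N))
  have hx₁ : x < 1 := Real.rpow_lt_one_of_one_lt_of_neg one_lt_two (neg_neg_of_pos (by positivity))
  calc besovSum d p q 0 (discSeq d (digitalSeq d C) N)
      ≤ ∑' j : validJ d, ENNReal.ofReal (4 ^ (q / p) * (22 * 4 ^ d * 2 ^ t / N) ^ q *
          x ^ jnorm d j.1) :=
        ENNReal.tsum_le_tsum fun j => ENNReal.ofReal_le_ofReal (hC.besov_level_le hp hq.le hN j.1)
    _ = ENNReal.ofReal (4 ^ (q / p) * (22 * 4 ^ d * 2 ^ t / N) ^ q) *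
          ∑' j : validJ d, ENNReal.ofReal (x ^ jnorm d j.1) := by
        simp only [ENNReal.ofReal_mul (by positivity :
          (0 : ℝ) ≤ 4 ^ (q / p) * (22 * 4 ^ d * 2 ^ t / N) ^ q), ENNReal.tsum_mul_left]
    _ ≤ ENNReal.ofReal (4 ^ (q / p) * (22 * 4 ^ d * 2 ^ t / N) ^ q) *
          ENNReal.ofReal ((1 + (1 - x)⁻¹) ^ d) := by
        gcongr
        exact tsum_validJ_ofReal_pow_jnorm_le d (by positivity) hx₁
    _ = ENNReal.ofReal (4 ^ (q / p) * (22 * 4 ^ d * 2 ^ t / N) ^ q * (1 + (1 - x)⁻¹) ^ d) :=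
        (ENNReal.ofReal_mul (by positivity)).symm
    _ ≤ _ := by
        have : 0 ≤ (1 - x)⁻¹ := inv_nonneg.2 (sub_nonneg.2 hx₁.le)
        gcongr
        exact one_add_inv_one_sub_two_rpow_le hr hℓ

end LevelSum

theorem besov_s0_upper_bound_general (d : ℕ) {p q : ℝ} (hp : 1 ≤ p) (hq : 0 < q) :
    ∃ C : ℝ, 0 < C ∧ ∀ (t : ℕ) (E : Fin d → ℕ → ℕ → ZMod 2), IsOrderSeq 2 t d E →
      ∀ N : ℕ, 2 ≤ N →
        besovSum d p q 0 (discSeq d (digitalSeq d E) N) ≤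
          ENNReal.ofReal (C * (2 : ℝ) ^ (q * (t : ℝ)) * (N : ℝ) ^ (-q) * Real.log N ^ d) := by
  have : 0 < Real.log 2 := Real.log_pos one_lt_two
  refine ⟨4 ^ (q / p) * (22 * 4 ^ d) ^ q * ((2 + 1 / (q / p * Real.log 2)) / Real.log 2) ^ d,
    by positivity, fun t E hE N hN => (hE.besovSum_le hp hq hN).trans_eq (congrArg _ ?_)⟩
  have hpow : ((22 : ℝ) * 4 ^ d * 2 ^ t / N) ^ q =
      (22 * 4 ^ d) ^ q * 2 ^ (q * (t : ℝ)) * (N : ℝ) ^ (-q) := by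
    rw [Real.div_rpow (by positivity) (by positivity),
      Real.mul_rpow (by positivity) (by positivity), Real.rpow_neg (by positivity), mul_comm q,
      Real.rpow_natCast_mul zero_le_two, div_eq_mul_inv]
  rw [hpow, Real.logb, mul_div_assoc', mul_div_right_comm, mul_pow]
  ring

/-- Besov `S⁰_{p,q}B` upper bound for order `2` digital `(t,d)`-sequences
with triangular generating matrices:
`∑_j 2^{|j|(1-1/p)q} (∑_m |⟨D^N,h_{j,m}⟩|^p)^{q/p} ≤ C · 2^{qt} · N^{-q} (log N)^d`. -/
theorem besov_s0_upper_bound (d : ℕ) (hd : 0 < d) (p q : ℝ) (hp : 1 ≤ p) (hq : 1 ≤ q) :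
    ∃ C : ℝ, 0 < C ∧ ∀ (t : ℕ) (E : Fin d → ℕ → ℕ → ZMod 2),
      IsOrderSeq 2 t d E → Triangular2 d E →
      ∀ N : ℕ, 2 ≤ N →
        besovSum d p q 0 (discSeq d (digitalSeq d E) N) ≤
          ENNReal.ofReal (C * (2:ℝ) ^ (q * (t:ℝ)) * (N:ℝ) ^ (-q) * Real.log N ^ d) := by
  obtain ⟨C, hC, hbound⟩ := besov_s0_upper_bound_general d hp (zero_lt_one.trans_le hq)
  exact ⟨C, hC, fun t E hE _ => hbound t E hE⟩

end
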